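/- arXiv:2507.14089 — 13 statements merged into one kernel-verified Lean document; each statement's English description precedes it below -/
import Mathlib

section
/- For every client c ∈ C there exists a facility f ∈ F that is paid with respect to the upper dual values α_{·,1} (i.e., ∑_{c'∈C} [α_{c',1} − cost(c',f)]⁺ ≥ λ) and that satisfies max{r_f², cost(c,f)} ≤ η · α_{c,0}, where η = 8000·Γ¹². -/
/-!
Scale squared distances back to distances: `α_c^* = D(c)²`, where `D(c)` is the least `s` such that
some facility of radius at most `s` lies within distance `s` of `c`. Starting from a facility `f₀`
realising `D(c)`, an Ekeland-type minimisation of `K · r_g + dist(f₀, g)` over `g ∈ F`, with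
`K = 20Γ⁴`, yields a facility `f` at distance at most `(K + 1) · D(c)` from `c` such that every
facility of much smaller radius is at distance of order `K · r_f` from `f`. Hence `D(y) > r_f / 2`
whenever `y` is within `9Γ⁴ · D(x)` of a point `x` of the open ball of radius `r_f` around `f`. A
problematic client `x` in that ball would have a client `y` in this range with `D(y) ≤ D(x) / 2`,
contradicting `D(x) ≤ r_f`. So the upper dual values of all clients in the ball carry the factor
`8Γ⁸` and dominate `r_f²`, and by the definition of `r_f` this pays for `f`.
-/

section FacilityLocation

variable {X : Type*} [PseudoMetricSpace X]

/-- A finite form of Ekeland's variational principle. -/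
theorem exists_add_dist_le_and_forall_le_add_dist {F : Finset X} {f₀ : X} (hf₀ : f₀ ∈ F)
    (φ : X → ℝ) :
    ∃ f ∈ F, φ f + dist f₀ f ≤ φ f₀ ∧ ∀ g ∈ F, φ f ≤ φ g + dist f g := by
  obtain ⟨f, hf, hmin⟩ := F.exists_min_image (fun g => φ g + dist f₀ g) ⟨f₀, hf₀⟩
  refine ⟨f, hf, by simpa using hmin f₀ hf₀, fun g hg => ?_⟩
  linarith [hmin g hg, dist_triangle f₀ f g]

theorem sum_max_sq_sub_sq_dist_le {C : Finset X} {f : X} {ρ : ℝ} {α : X → ℝ} (hρ : 0 ≤ ρ)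
    (hα : ∀ c ∈ C, dist c f < ρ → ρ ^ 2 ≤ α c) :
    ∑ c ∈ C, max 0 (ρ ^ 2 - dist c f ^ 2) ≤ ∑ c ∈ C, max 0 (α c - dist c f ^ 2) := by
  refine Finset.sum_le_sum fun c hc => ?_
  obtain hfar | hnear := le_or_gt ρ (dist c f)
  · rw [max_eq_left (sub_nonpos.2 (by gcongr))]
    exact le_max_left _ _
  · gcongr
    exact hα c hc hnear

/-- The least `s` such that some facility of `F` has radius at most `s` and lies within distance
`s` of `x`. For nonnegative radii this is the square root of the paper's `α_x^*`. -/
noncomputable def connectionRadius (F : Finset X) (hF : F.Nonempty) (r : X → ℝ) (x : X) : ℝ :=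
  F.inf' hF fun f => max (r f) (dist x f)

variable {F : Finset X} {hF : F.Nonempty} {r : X → ℝ}

theorem connectionRadius_le {f : X} (hf : f ∈ F) (x : X) :
    connectionRadius F hF r x ≤ max (r f) (dist x f) :=
  F.inf'_le (fun f => max (r f) (dist x f)) hf

theorem connectionRadius_le_radius {f x : X} (hf : f ∈ F) (hx : dist x f ≤ r f) :
    connectionRadius F hF r x ≤ r f :=
  (connectionRadius_le hf x).trans_eq (max_eq_left hx)

variable (hF r) in
theorem exists_le_connectionRadius (x : X) :
    ∃ f ∈ F, r f ≤ connectionRadius F hF r x ∧ dist x f ≤ connectionRadius F hF r x := by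
  obtain ⟨f, hf, hmin⟩ := F.exists_mem_eq_inf' hF fun f => max (r f) (dist x f)
  exact ⟨f, hf, max_le_iff.1 hmin.ge⟩

theorem connectionRadius_nonneg (x : X) : 0 ≤ connectionRadius F hF r x :=
  let ⟨_, _, _, hdist⟩ := exists_le_connectionRadius hF r x
  dist_nonneg.trans hdist

theorem inf'_max_sq_eq_connectionRadius_sq (hr : ∀ f ∈ F, 0 ≤ r f) (x : X) :
    F.inf' hF (fun f => max (r f ^ 2) (dist x f ^ 2)) = connectionRadius F hF r x ^ 2 := by
  apply le_antisymm
  · obtain ⟨f, hf, hrad, hdist⟩ := exists_le_connectionRadius hF r x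
    exact F.inf'_le_of_le _ hf (max_le (pow_le_pow_left₀ (hr f hf) hrad 2) (by gcongr))
  · refine F.le_inf' hF _ fun f hf => ?_
    have hD := connectionRadius_nonneg (hF := hF) (r := r) x
    exact le_max_iff.2 <| (le_max_iff.1 (connectionRadius_le hf x)).imp
      (pow_le_pow_left₀ hD · 2) (pow_le_pow_left₀ hD · 2)

variable (hF) in
theorem exists_dist_le_and_forall_le_add_dist (hr : ∀ f ∈ F, 0 ≤ r f) {K : ℝ} (hK : 0 < K) (x : X) :
    ∃ f ∈ F, r f ≤ connectionRadius F hF r x ∧ dist x f ≤ (K + 1) * connectionRadius F hF r x ∧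
      ∀ g ∈ F, K * r f ≤ K * r g + dist f g := by
  obtain ⟨f₀, hf₀, hrad₀, hdist₀⟩ := exists_le_connectionRadius hF r x
  obtain ⟨f, hf, hdescent, hmin⟩ := exists_add_dist_le_and_forall_le_add_dist hf₀ (K * r ·)
  have hKrad₀ : K * r f₀ ≤ K * connectionRadius F hF r x := by gcongr
  have hKrad : 0 ≤ K * r f := mul_nonneg hK.le (hr f hf)
  refine ⟨f, hf, le_of_mul_le_mul_left ?_ hK, ?_, hmin⟩
  · linarith [dist_nonneg (x := f₀) (y := f)]
  · linarith [dist_triangle x f₀ f]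

theorem mul_radius_le_mul_connectionRadius_add_dist {f : X} {K : ℝ} (hK : 0 ≤ K)
    (hmin : ∀ g ∈ F, K * r f ≤ K * r g + dist f g) (y : X) :
    K * r f ≤ (K + 1) * connectionRadius F hF r y + dist f y := by
  obtain ⟨g, hg, hrad, hdist⟩ := exists_le_connectionRadius hF r y
  calc K * r f ≤ K * r g + dist f g := hmin g hg
    _ ≤ K * connectionRadius F hF r y + (dist f y + connectionRadius F hF r y) := by
      gcongr
      exact (dist_triangle f y g).trans (by gcongr)
    _ = (K + 1) * connectionRadius F hF r y + dist f y := by ring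

theorem radius_lt_two_mul_connectionRadius {f x y : X} {K γ : ℝ} (hf : f ∈ F) (hγ : 0 ≤ γ)
    (hK : 2 * γ + 3 < K) (hmin : ∀ g ∈ F, K * r f ≤ K * r g + dist f g)
    (hx : dist x f < r f) (hy : dist x y ≤ γ * connectionRadius F hF r x) :
    r f < 2 * connectionRadius F hF r y := by
  have hrpos : 0 < r f := dist_nonneg.trans_lt hx
  have hxrad : connectionRadius F hF r x ≤ r f := connectionRadius_le_radius hf hx.le
  have hfy : dist f y ≤ (1 + γ) * r f :=
    calc dist f y ≤ dist x f + dist x y := dist_triangle_left f y x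
      _ ≤ r f + γ * r f := add_le_add hx.le (hy.trans (by gcongr))
      _ = (1 + γ) * r f := by ring
  have hKy := mul_radius_le_mul_connectionRadius_add_dist (hF := hF) (by linarith) hmin y
  have hgap : 0 < (K - (2 * γ + 3)) * r f := mul_pos (sub_pos.2 hK) hrpos
  refine lt_of_mul_lt_mul_left (a := K + 1) ?_ (by linarith)
  linarith

variable (hF) in
theorem exists_paid_facility_of_four_mul_sq_le {C : Finset X} {α : X → ℝ} {K γ : ℝ}
    (hr : ∀ f ∈ F, 0 ≤ r f) (hγ : 0 ≤ γ) (hK : 2 * γ + 3 < K)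
    (hα : ∀ x ∈ C, (∀ y ∈ C, dist x y ≤ γ * connectionRadius F hF r x →
      connectionRadius F hF r x < 2 * connectionRadius F hF r y) →
      4 * connectionRadius F hF r x ^ 2 ≤ α x) (c : X) :
    ∃ f ∈ F,
      ∑ x ∈ C, max 0 (r f ^ 2 - dist x f ^ 2) ≤ ∑ x ∈ C, max 0 (α x - dist x f ^ 2) ∧
      max (r f ^ 2) (dist c f ^ 2) ≤ ((K + 1) * connectionRadius F hF r c) ^ 2 := by
  set D := connectionRadius F hF r
  have hD0 : ∀ x, 0 ≤ D x := connectionRadius_nonneg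
  obtain ⟨f, hf, hrad, hdist, hmin⟩ :=
    exists_dist_le_and_forall_le_add_dist hF hr (by linarith : 0 < K) c
  refine ⟨f, hf, sum_max_sq_sub_sq_dist_le (hr f hf) fun x hx hxf => ?_, ?_⟩
  · have hrad_lt : ∀ y, dist x y ≤ γ * D x → r f < 2 * D y := fun y =>
      radius_lt_two_mul_connectionRadius hf hγ hK hmin hxf
    have hrad_x : r f < 2 * D x := hrad_lt x (by rw [dist_self]; exact mul_nonneg hγ (hD0 x))
    calc r f ^ 2 ≤ (2 * D x) ^ 2 := pow_le_pow_left₀ (hr f hf) hrad_x.le 2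
      _ = 4 * D x ^ 2 := by ring
      _ ≤ α x := hα x hx fun y _ hxy =>
        (connectionRadius_le_radius hf hxf.le).trans_lt (hrad_lt y hxy)
  · have hrad' : r f ≤ (K + 1) * D c :=
      hrad.trans (le_mul_of_one_le_left (hD0 c) (by linarith))
    exact max_le (pow_le_pow_left₀ (hr f hf) hrad' 2) (by gcongr)

theorem two_mul_le_of_le_div {s t a b A B : ℝ} (hA : 0 < A) (hB : 4 ≤ B) (hs : 0 ≤ s)
    (ht : t ^ 2 ≤ A * b) (hsa : B * a ≤ s ^ 2) (hba : b ≤ a / A) : 2 * t ≤ s := by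
  have hta : t ^ 2 ≤ a := ht.trans ((le_div_iff₀' hA).1 hba)
  refine le_of_abs_le (abs_le_of_sq_le_sq ?_ hs)
  calc (2 * t) ^ 2 = 4 * t ^ 2 := by ring
    _ ≤ B * a := by gcongr
    _ ≤ s ^ 2 := hsa

theorem sq_mul_le_of_sq_le {s a Γ : ℝ} (hΓ : 1 ≤ Γ ^ 4) (hs : s ^ 2 ≤ 8 * Γ ^ 4 * a) :
    ((20 * Γ ^ 4 + 1) * s) ^ 2 ≤ 8000 * Γ ^ 12 * a := by
  have ha : 0 ≤ Γ ^ 4 * a := by linarith [sq_nonneg s]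
  calc ((20 * Γ ^ 4 + 1) * s) ^ 2 = (20 * Γ ^ 4 + 1) ^ 2 * s ^ 2 := mul_pow _ _ _
    _ ≤ (21 * Γ ^ 4) ^ 2 * (8 * Γ ^ 4 * a) := by gcongr; linarith
    _ = 3528 * Γ ^ 8 * (Γ ^ 4 * a) := by ring
    _ ≤ 8000 * Γ ^ 8 * (Γ ^ 4 * a) := by gcongr; norm_num
    _ = 8000 * Γ ^ 12 * a := by ring

theorem paid_facility_exists_general (F C : Finset X) (hF : F.Nonempty) (lam Γ : ℝ)
    (hΓ : 2 ≤ Γ ^ 2) (r : X → ℝ) (hr0 : ∀ f ∈ F, 0 ≤ r f)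
    (hr : ∀ f ∈ F, ∑ c ∈ C, max 0 (r f ^ 2 - dist c f ^ 2) = lam)
    (αstar : X → ℝ)
    (hαstar : ∀ c, αstar c = F.inf' hF (fun f => max (r f ^ 2) (dist c f ^ 2)))
    (α0 : X → ℝ)
    (hα0 : ∀ c ∈ C, αstar c / (8 * Γ ^ 4) ≤ α0 c ∧ α0 c ≤ αstar c / (2 * Γ ^ 2))
    (C' : Finset X)
    (hprob : ∀ c ∈ C, c ∈ C' → ∃ c' ∈ C, dist c c' ≤ 9 * Γ ^ 4 * √(αstar c) ∧
      α0 c' ≤ α0 c / (8 * Γ ^ 4))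
    (α1 : X → ℝ) (hα1 : ∀ c ∈ C, c ∉ C' → α1 c = 8 * Γ ^ 8 * α0 c) :
    ∀ c ∈ C, ∃ f ∈ F,
      lam ≤ ∑ c' ∈ C, max 0 (α1 c' - dist c' f ^ 2) ∧
      max (r f ^ 2) (dist c f ^ 2) ≤ 8000 * Γ ^ 12 * α0 c := by
  intro c hc
  have hΓ4 : 4 ≤ Γ ^ 4 := by nlinarith
  set D := connectionRadius F hF r
  have hD0 : ∀ x, 0 ≤ D x := connectionRadius_nonneg
  have hD : ∀ x, αstar x = D x ^ 2 := fun x =>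
    (hαstar x).trans (inf'_max_sq_eq_connectionRadius_sq hr0 x)
  simp only [hD, Real.sqrt_sq (hD0 _)] at hα0 hprob
  have hlower : ∀ x ∈ C, D x ^ 2 ≤ 8 * Γ ^ 4 * α0 x := fun x hx =>
    (div_le_iff₀' (by positivity)).1 (hα0 x hx).1
  have hupper : ∀ x ∈ C, 2 * Γ ^ 2 * α0 x ≤ D x ^ 2 := fun x hx =>
    (le_div_iff₀' (by positivity)).1 (hα0 x hx).2
  have hα1_ge : ∀ x ∈ C, (∀ y ∈ C, dist x y ≤ 9 * Γ ^ 4 * D x → D x < 2 * D y) →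
      4 * D x ^ 2 ≤ α1 x := by
    intro x hx hnear
    have hxC' : x ∉ C' := fun hmem =>
      let ⟨y, hy, hxy, hαy⟩ := hprob x hx hmem
      (hnear y hy hxy).not_ge <| two_mul_le_of_le_div (by positivity) (by linarith) (hD0 x)
        (hlower y hy) (hupper x hx) hαy
    calc 4 * D x ^ 2 ≤ Γ ^ 4 * (8 * Γ ^ 4 * α0 x) := by gcongr; exact hlower x hx
      _ = α1 x := by rw [hα1 x hx hxC']; ring
  obtain ⟨f, hf, hpaid, hcost⟩ := exists_paid_facility_of_four_mul_sq_le hF hr0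
    (K := 20 * Γ ^ 4) (by positivity) (by linarith) hα1_ge c
  exact ⟨f, hf, (hr f hf).ge.trans hpaid,
    hcost.trans (sq_mul_le_of_sq_le (by linarith) (hlower c hc))⟩

end FacilityLocation

/-- Lemma 4.2 (paid facility exists): for every client `c ∈ C` there exists a
facility `f ∈ F` that is paid w.r.t. the upper dual values `α_{·,1}`, i.e.
`∑_{c'∈C} [α_{c',1} − cost(c',f)]⁺ ≥ λ`, and satisfies
`max{r_f², cost(c,f)} ≤ η · α_{c,0}` with `η = 8000·Γ¹²`. -/
theorem paid_facility_exists
    (d : ℕ) (F C : Finset (EuclideanSpace ℝ (Fin d)))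
    (hF : F.Nonempty) (hC : C.Nonempty)
    (lam : ℝ) (hlam : 0 < lam)
    (Γ : ℝ) (hΓ : 5 ≤ Γ)
    -- facility radii: `r f` is the unique nonnegative real with
    -- `∑_{c∈C} [r_f² − cost(c,f)]⁺ = λ`
    (r : EuclideanSpace ℝ (Fin d) → ℝ)
    (hr0 : ∀ f ∈ F, 0 ≤ r f)
    (hr : ∀ f ∈ F, ∑ c ∈ C, max 0 (r f ^ 2 - dist c f ^ 2) = lam)
    -- `α_c^* = min_{f∈F} max{r_f², cost(c,f)}`
    (αstar : EuclideanSpace ℝ (Fin d) → ℝ)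
    (hαstar : ∀ c, αstar c = F.inf' hF (fun f => max (r f ^ 2) (dist c f ^ 2)))
    -- initial dual values with `α_c^*/C_D^+ ≤ α_{c,0} ≤ α_c^*/C_D^-`,
    -- where `C_D^+ = 8Γ⁴` and `C_D^- = 2Γ²`
    (α0 : EuclideanSpace ℝ (Fin d) → ℝ)
    (hα0 : ∀ c ∈ C, αstar c / (8 * Γ ^ 4) ≤ α0 c ∧ α0 c ≤ αstar c / (2 * Γ ^ 2))
    -- problematic clients `C' ⊆ C`, with `γ₁ = 4Γ⁴`, `γ₂ = 9Γ⁴`, `Q = 8Γ⁴`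
    (C' : Finset (EuclideanSpace ℝ (Fin d))) (hC'sub : C' ⊆ C)
    (hprob1 : ∀ c ∈ C,
      (∃ c' ∈ C, dist c c' ≤ 4 * Γ ^ 4 * Real.sqrt (αstar c) ∧
        α0 c' ≤ α0 c / (8 * Γ ^ 4)) → c ∈ C')
    (hprob2 : ∀ c ∈ C', ∃ c' ∈ C, dist c c' ≤ 9 * Γ ^ 4 * Real.sqrt (αstar c) ∧
        α0 c' ≤ α0 c / (8 * Γ ^ 4))
    -- upper dual values, with `C_A = 8Γ⁸`
    (α1 : EuclideanSpace ℝ (Fin d) → ℝ)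
    (hα1prob : ∀ c ∈ C, c ∈ C' → α1 c = α0 c)
    (hα1ok : ∀ c ∈ C, c ∉ C' → α1 c = 8 * Γ ^ 8 * α0 c) :
    ∀ c ∈ C, ∃ f ∈ F,
      lam ≤ ∑ c' ∈ C, max 0 (α1 c' - dist c' f ^ 2) ∧
      max (r f ^ 2) (dist c f ^ 2) ≤ 8000 * Γ ^ 12 * α0 c :=
  paid_facility_exists_general F C hF lam Γ (by nlinarith) r hr0 hr αstar hαstar α0 hα0 C'
    (fun c _ => hprob2 c) α1 hα1ok
end

section
/- Let c ∈ C be a client and f ∈ F a facility. If c κ-approximately contributes to f with respect to the upper dual values α_{·,1}, i.e., κ·α_{c,1} > cost(c,f) with κ = Γ², then α_{c,1} ≤ ρ·r_f², where ρ := C_A·C_D^+·Q/(C_D^-)² = 128·Γ¹². -/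
/-!
Let `f` have radius `r`. Since the terms `[r² - dist(x, f)²]⁺` sum to `λ > 0`, some client `c'` lies
strictly within distance `r` of `f`, so `α*_{c'} ≤ r²` and hence `α_{c',0} ≤ r² / C_D^-`.

A problematic `c` contributes to `f` already with its initial dual value, and `κ ≤ C_D^-` then
forces `C_D^- · α_{c,0} ≤ r²`. If `c` is not problematic and `α_{c,0}` were larger than
`Q · r² / C_D^-`, then both `dist(c, f)` and `r` would be bounded by multiples of `√α*_c`, making
`c'` a client near `c` with `α_{c',0} ≤ α_{c,0} / Q`, which non-problematic clients do not have.
This gives the factor `C_A · Q / C_D^-`.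
-/

theorem dist_le_sqrt_add_sqrt_mul_sqrt {X : Type*} [PseudoMetricSpace X] {x y z : X} {a b t : ℝ}
    (ha : 0 ≤ a) (hb : 0 ≤ b) (hxz : dist x z ^ 2 ≤ a * t) (hyz : dist y z ^ 2 ≤ b * t) :
    dist x y ≤ (√a + √b) * √t :=
  calc
    dist x y ≤ dist x z + dist y z := dist_triangle_right x y z
    _ ≤ √(a * t) + √(b * t) := add_le_add (Real.le_sqrt_of_sq_le hxz) (Real.le_sqrt_of_sq_le hyz)
    _ = (√a + √b) * √t := by rw [Real.sqrt_mul ha, Real.sqrt_mul hb, add_mul]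

theorem exists_lt_of_hasSum_max_zero_sub {ι : Type*} {u : ι → ℝ} {R s : ℝ}
    (h : HasSum (fun i ↦ max 0 (R - u i)) s) (hs : 0 < s) : ∃ i, u i < R := by
  by_contra! hu
  have hzero : ∀ i, max 0 (R - u i) = 0 := fun i ↦ max_eq_left (sub_nonpos.mpr (hu i))
  simp only [hzero] at h
  exact hs.ne (hasSum_zero.unique h)

theorem isGLB_image_inf' {ι α : Type*} [SemilatticeInf α] {s : Finset ι} (hs : s.Nonempty)
    (g : ι → α) : IsGLB (g '' s) (s.inf' hs g) :=
  ⟨Set.forall_mem_image.mpr fun _ hi ↦ s.inf'_le g hi,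
    fun _ hb ↦ s.le_inf' hs g fun _ hi ↦ hb (Set.mem_image_of_mem g hi)⟩

theorem mul_le_left_of_le_max {a κ D R u : ℝ} (hκ : 0 ≤ κ) (hκD : κ ≤ D) (hu : 0 ≤ u)
    (hcontrib : u < κ * a) (hmax : D * a ≤ max R u) : D * a ≤ R := by
  have ha : 0 < a := pos_of_mul_pos_right (hu.trans_lt hcontrib) hκ
  have huD : u < D * a := hcontrib.trans_le (by gcongr)
  exact (le_max_iff.mp hmax).resolve_right huD.not_ge

theorem mul_le_mul_of_near_imp_lt {X : Type*} [PseudoMetricSpace X] {c c' f : X}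
    {a a' t R K D Q γ : ℝ} (hK : 0 ≤ K) (hD : 0 < D) (hQ : 0 < Q) (hγ : √(K / D) + √(1 / Q) ≤ γ)
    (hcf : dist c f ^ 2 ≤ K * a) (hc'f : dist c' f ^ 2 ≤ R) (ha : D * a ≤ t) (ha' : D * a' ≤ R)
    (hnear : dist c c' ≤ γ * √t → a < Q * a') : D * a ≤ Q * R := by
  by_contra! hlarge
  have hcf' : dist c f ^ 2 ≤ K / D * t :=
    calc
      dist c f ^ 2 ≤ K / D * (D * a) := by rwa [← mul_assoc, div_mul_cancel₀ K hD.ne']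
      _ ≤ K / D * t := by gcongr
  have hc'f' : dist c' f ^ 2 ≤ 1 / Q * t := by
    rw [one_div_mul_eq_div, le_div_iff₀' hQ]
    calc
      Q * dist c' f ^ 2 ≤ Q * R := by gcongr
      _ ≤ t := hlarge.le.trans ha
  have hcc' : dist c c' ≤ γ * √t :=
    (dist_le_sqrt_add_sqrt_mul_sqrt (by positivity) (by positivity) hcf' hc'f').trans (by gcongr)
  have : D * a < Q * R :=
    calc
      D * a < D * (Q * a') := by gcongr; exact hnear hcc'
      _ = Q * (D * a') := by ring
      _ ≤ Q * R := by gcongr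
  exact this.not_gt hlarge

/-- The parameters `D`, `A` and `γ` stand for `C_D^-`, `C_A` and `γ₁`. -/
theorem contributing_client_radius_bound_general {X : Type*} [PseudoMetricSpace X] {F C C' : Set X}
    {lam κ D Q A γ : ℝ} (hlam : 0 < lam) (hκ : 0 < κ) (hκD : κ ≤ D) (hQ : 0 < Q) (hAQ : 1 ≤ A * Q)
    (hγ : √(κ * A / D) + √(1 / Q) ≤ γ) {r αstar α0 α1 : X → ℝ}
    (hr : ∀ f ∈ F, HasSum (fun c : C ↦ max 0 (r f ^ 2 - dist (c : X) f ^ 2)) lam)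
    (hαstar : ∀ c ∈ C, IsGLB ((fun f ↦ max (r f ^ 2) (dist c f ^ 2)) '' F) (αstar c))
    (hα0 : ∀ c ∈ C, α0 c ≤ αstar c / D)
    (hprob : ∀ c ∈ C, (∃ c' ∈ C, dist c c' ≤ γ * √(αstar c) ∧ α0 c' ≤ α0 c / Q) → c ∈ C')
    (hα1prob : ∀ c ∈ C, c ∈ C' → α1 c = α0 c) (hα1ok : ∀ c ∈ C, c ∉ C' → α1 c = A * α0 c)
    {c f : X} (hc : c ∈ C) (hf : f ∈ F) (hcf : dist c f ^ 2 < κ * α1 c) :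
    α1 c ≤ A * Q / D * r f ^ 2 := by
  have hD : 0 < D := hκ.trans_le hκD
  have hA : 0 < A := pos_of_mul_pos_left (one_pos.trans_le hAQ) hQ.le
  have hα0star (x) (hx : x ∈ C) : D * α0 x ≤ αstar x := (le_div_iff₀' hD).mp (hα0 x hx)
  have hα0max (x) (hx : x ∈ C) : D * α0 x ≤ max (r f ^ 2) (dist x f ^ 2) :=
    (hα0star x hx).trans ((hαstar x hx).1 ⟨f, hf, rfl⟩)
  rw [div_mul_eq_mul_div, le_div_iff₀' hD]
  by_cases hcC' : c ∈ C'
  · rw [hα1prob c hc hcC'] at hcf ⊢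
    calc
      D * α0 c ≤ r f ^ 2 := mul_le_left_of_le_max hκ.le hκD (sq_nonneg _) hcf (hα0max c hc)
      _ ≤ A * Q * r f ^ 2 := le_mul_of_one_le_left (sq_nonneg _) hAQ
  · rw [hα1ok c hc hcC', ← mul_assoc] at hcf
    obtain ⟨⟨c', hc'⟩, hc'f⟩ := exists_lt_of_hasSum_max_zero_sub (hr f hf) hlam
    have hα0c' : D * α0 c' ≤ r f ^ 2 := (hα0max c' hc').trans (max_le le_rfl hc'f.le)
    have hnear (h : dist c c' ≤ γ * √(αstar c)) : α0 c < Q * α0 c' := by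
      by_contra! hle
      exact hcC' (hprob c hc ⟨c', hc', h, (le_div_iff₀' hQ).mpr hle⟩)
    have hα0c : D * α0 c ≤ Q * r f ^ 2 :=
      mul_le_mul_of_near_imp_lt (by positivity) hD hQ hγ hcf.le hc'f.le (hα0star c hc) hα0c' hnear
    calc
      D * α1 c = A * (D * α0 c) := by rw [hα1ok c hc hcC', mul_left_comm]
      _ ≤ A * (Q * r f ^ 2) := mul_le_mul_of_nonneg_left hα0c hA.le
      _ = A * Q * r f ^ 2 := (mul_assoc A Q _).symm

theorem sqrt_add_sqrt_le_four_mul_pow_four {Γ : ℝ} (hΓ : 1 ≤ Γ) :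
    √(Γ ^ 2 * (8 * Γ ^ 8) / (2 * Γ ^ 2)) + √(1 / (8 * Γ ^ 4)) ≤ 4 * Γ ^ 4 := by
  have hΓ4 : 1 ≤ Γ ^ 4 := one_le_pow₀ hΓ
  have hfirst : √(Γ ^ 2 * (8 * Γ ^ 8) / (2 * Γ ^ 2)) = 2 * Γ ^ 4 := by
    rw [← Real.sqrt_sq (by positivity : 0 ≤ 2 * Γ ^ 4)]
    congr 1
    field_simp
    ring
  have hsecond : √(1 / (8 * Γ ^ 4)) ≤ 1 :=
    Real.sqrt_le_one.mpr (div_le_one_of_le₀ (by linarith) (by positivity))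
  linarith

/-- Lemma 4.3: if a client `c` κ-approximately contributes to a facility `f`
w.r.t. the upper dual values `α_{·,1}` (i.e. `κ·α_{c,1} > cost(c,f)` with `κ = Γ²`),
then `α_{c,1} ≤ ρ·r_f²` with `ρ = C_A·C_D^+·Q/(C_D^-)² = 128·Γ¹²`. -/
theorem contributing_client_radius_bound
    (d : ℕ) (F C : Finset (EuclideanSpace ℝ (Fin d)))
    (hF : F.Nonempty) (hC : C.Nonempty)
    (lam : ℝ) (hlam : 0 < lam)
    (Γ : ℝ) (hΓ : 5 ≤ Γ)
    -- facility radii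
    (r : EuclideanSpace ℝ (Fin d) → ℝ)
    (hr0 : ∀ f ∈ F, 0 ≤ r f)
    (hr : ∀ f ∈ F, ∑ c ∈ C, max 0 (r f ^ 2 - dist c f ^ 2) = lam)
    -- `α_c^* = min_{f∈F} max{r_f², cost(c,f)}`
    (αstar : EuclideanSpace ℝ (Fin d) → ℝ)
    (hαstar : ∀ c, αstar c = F.inf' hF (fun f => max (r f ^ 2) (dist c f ^ 2)))
    -- initial dual values with `C_D^+ = 8Γ⁴`, `C_D^- = 2Γ²`
    (α0 : EuclideanSpace ℝ (Fin d) → ℝ)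
    (hα0 : ∀ c ∈ C, αstar c / (8 * Γ ^ 4) ≤ α0 c ∧ α0 c ≤ αstar c / (2 * Γ ^ 2))
    -- problematic clients, `γ₁ = 4Γ⁴`, `γ₂ = 9Γ⁴`, `Q = 8Γ⁴`
    (C' : Finset (EuclideanSpace ℝ (Fin d))) (hC'sub : C' ⊆ C)
    (hprob1 : ∀ c ∈ C,
      (∃ c' ∈ C, dist c c' ≤ 4 * Γ ^ 4 * Real.sqrt (αstar c) ∧
        α0 c' ≤ α0 c / (8 * Γ ^ 4)) → c ∈ C')
    (hprob2 : ∀ c ∈ C', ∃ c' ∈ C, dist c c' ≤ 9 * Γ ^ 4 * Real.sqrt (αstar c) ∧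
        α0 c' ≤ α0 c / (8 * Γ ^ 4))
    -- upper dual values, `C_A = 8Γ⁸`
    (α1 : EuclideanSpace ℝ (Fin d) → ℝ)
    (hα1prob : ∀ c ∈ C, c ∈ C' → α1 c = α0 c)
    (hα1ok : ∀ c ∈ C, c ∉ C' → α1 c = 8 * Γ ^ 8 * α0 c) :
    ∀ c ∈ C, ∀ f ∈ F, dist c f ^ 2 < Γ ^ 2 * α1 c →
      α1 c ≤ 128 * Γ ^ 12 * r f ^ 2 := by
  intro c hc f hf hcf
  have hΓ1 : 1 ≤ Γ := by linarith
  have hκD : Γ ^ 2 ≤ 2 * Γ ^ 2 := by linarith [sq_nonneg Γ]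
  have hAQ : 1 ≤ 8 * Γ ^ 8 * (8 * Γ ^ 4) := by linarith [one_le_pow₀ hΓ1 (n := 12)]
  calc
    α1 c ≤ 8 * Γ ^ 8 * (8 * Γ ^ 4) / (2 * Γ ^ 2) * r f ^ 2 :=
      contributing_client_radius_bound_general (F := F) (C := C) (C' := C') hlam (by positivity)
        hκD (by positivity) hAQ (sqrt_add_sqrt_le_four_mul_pow_four hΓ1)
        (fun f hf ↦ hr f hf ▸ C.hasSum _) (fun c _ ↦ hαstar c ▸ isGLB_image_inf' hF _)
        (fun c hc ↦ (hα0 c hc).2) hprob1 hα1prob hα1ok hc hf hcf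
    _ = 32 * Γ ^ 10 * r f ^ 2 := by
      field_simp
      ring
    _ ≤ 128 * Γ ^ 12 * r f ^ 2 := by
      gcongr <;> norm_num
end

section
/- Let c ∈ C be a client and f, f' ∈ F two facilities. If c κ-approximately contributes (with κ = Γ²) to both f and f' with respect to the upper dual values α_{·,1}, i.e., κ·α_{c,1} > cost(c,f) and κ·α_{c,1} > cost(c,f'), then the radii satisfy max{r_f, r_{f'}} ≤ ζ · min{r_f, r_{f'}} with ζ := 1 + 2·√(ρ·κ) = 1 + 16√2·Γ⁷ (where ρ = 128·Γ¹²), and moreover dist(f,f') ≤ 2·√(κ·ρ) · min{r_f, r_{f'}}. -/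
/-!
The radius is 1-Lipschitz in the facility, because moving a facility by `δ` while enlarging its
radius by `δ` decreases no client's contribution. So both bounds follow once the dual value of a
client contributing to `f` is shown to be at most a constant times `r_f²`. For a problematic client
this holds since its contribution condition makes `cost(c, f)` smaller than `α_c^*`, leaving
`α_c^* ≤ r_f²`. For any other client, either `r_f²` is already as large as `κ α_{c,1}`, or some
client `c'` inside the ball of radius `r_f` around `f` is so close to `c` that not being problematic
forces `α_{c,0} < Q α_{c',0}`, and `α_{c',0}` is controlled by `r_f²`.
-/

section PseudoMetricSpace

variable {X : Type*} [PseudoMetricSpace X] {C : Finset X} {c f g : X} {r s t : ℝ}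

/-- The total contribution `∑_{c ∈ C} [r² - cost(c, f)]⁺` of the clients to the facility `f` at
radius `r`. With opening cost `λ`, the radius of `f` is the `r ≥ 0` at which it equals `λ`. -/
def totalContribution (C : Finset X) (f : X) (r : ℝ) : ℝ :=
  ∑ c ∈ C, max 0 (r ^ 2 - dist c f ^ 2)

theorem exists_mem_dist_lt_of_totalContribution_pos (hr : 0 ≤ r)
    (hpos : 0 < totalContribution C f r) : ∃ c ∈ C, dist c f < r := by
  obtain ⟨c, hc, hcpos⟩ := Finset.exists_lt_of_sum_lt
    (Finset.sum_const_zero.trans_lt hpos : ∑ _c ∈ C, (0 : ℝ) < _)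
  have hsq : 0 < r ^ 2 - dist c f ^ 2 := (lt_max_iff.1 hcpos).resolve_left (lt_irrefl 0)
  exact ⟨c, hc, lt_of_pow_lt_pow_left₀ 2 hr (sub_pos.1 hsq)⟩

theorem totalContribution_lt_of_lt (hr : 0 ≤ r) (hpos : 0 < totalContribution C f r)
    (hrs : r < s) : totalContribution C f r < totalContribution C f s := by
  have hsq : r ^ 2 < s ^ 2 := pow_lt_pow_left₀ hrs hr two_ne_zero
  obtain ⟨c, hc, hcr⟩ := exists_mem_dist_lt_of_totalContribution_pos hr hpos
  have hcsq : dist c f ^ 2 < r ^ 2 := pow_lt_pow_left₀ hcr dist_nonneg two_ne_zero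
  refine Finset.sum_lt_sum (fun c _ => by gcongr) ⟨c, hc, ?_⟩
  rw [max_eq_right (by linarith), max_eq_right (by linarith)]
  gcongr

theorem totalContribution_le_totalContribution_add_dist (hr : 0 ≤ r) :
    totalContribution C f r ≤ totalContribution C g (r + dist f g) := by
  refine Finset.sum_le_sum fun c _ => ?_
  rcases le_total r (dist c f) with hfar | hnear
  · have hsq : r ^ 2 ≤ dist c f ^ 2 := pow_le_pow_left₀ hr hfar 2
    exact max_le (le_max_left _ _) ((sub_nonpos.2 hsq).trans (le_max_left _ _))
  · have hcg : dist c g ^ 2 ≤ (dist c f + dist f g) ^ 2 :=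
      pow_le_pow_left₀ dist_nonneg (dist_triangle _ _ _) 2
    have hcross : dist c f * dist f g ≤ r * dist f g := by gcongr
    exact max_le_max_left 0 (by linarith)

theorem le_add_dist_of_totalContribution_le (hr : 0 ≤ r) (hpos : 0 < totalContribution C f r)
    (hle : totalContribution C g s ≤ totalContribution C f r) : s ≤ r + dist f g := by
  by_contra! hlt
  have hshift := totalContribution_le_totalContribution_add_dist (C := C) (f := f) (g := g) hr
  exact (hle.trans hshift).not_gt <|
    totalContribution_lt_of_lt (by positivity) (hpos.trans_le hshift) hlt

theorem abs_sub_le_dist_of_totalContribution_eq (hr : 0 ≤ r) (hs : 0 ≤ s)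
    (hpos : 0 < totalContribution C f r)
    (heq : totalContribution C f r = totalContribution C g s) : |r - s| ≤ dist f g := by
  refine abs_sub_le_iff.2 ⟨?_, ?_⟩
  · linarith [le_add_dist_of_totalContribution_le hs (heq ▸ hpos) heq.le, dist_comm f g]
  · linarith [le_add_dist_of_totalContribution_le hr hpos heq.ge]

theorem exists_mem_dist_lt_and_dist_lt_two_mul_sqrt (hr : 0 ≤ r)
    (hpos : 0 < totalContribution C f r) (hcost : dist c f ^ 2 < t) (hrt : r ^ 2 < t) :
    ∃ c' ∈ C, dist c' f < r ∧ dist c c' < 2 * √t := by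
  obtain ⟨c', hc', hlt⟩ := exists_mem_dist_lt_of_totalContribution_pos hr hpos
  refine ⟨c', hc', hlt, ?_⟩
  linarith [dist_triangle_right c c' f, Real.lt_sqrt_of_sq_lt hcost, Real.lt_sqrt_of_sq_lt hrt]

theorem dist_le_two_mul_sqrt_mul {k : ℝ} (hr : 0 ≤ r) (hf : dist c f ^ 2 ≤ k * r ^ 2)
    (hg : dist c g ^ 2 ≤ k * r ^ 2) : dist f g ≤ 2 * √k * r := by
  have hsqrt : √(k * r ^ 2) = √k * r := by rw [Real.sqrt_mul' _ (sq_nonneg r), Real.sqrt_sq hr]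
  linarith [dist_triangle_left f g c, Real.le_sqrt_of_sq_le hf, Real.le_sqrt_of_sq_le hg]

theorem max_le_and_dist_le_mul_min {k : ℝ} (hr : 0 ≤ r) (hs : 0 ≤ s)
    (hpos : 0 < totalContribution C f r)
    (heq : totalContribution C f r = totalContribution C g s)
    (hf : dist c f ^ 2 ≤ k * min r s ^ 2) (hg : dist c g ^ 2 ≤ k * min r s ^ 2) :
    max r s ≤ (1 + 2 * √k) * min r s ∧ dist f g ≤ 2 * √k * min r s := by
  have hdist : dist f g ≤ 2 * √k * min r s := dist_le_two_mul_sqrt_mul (le_min hr hs) hf hg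
  have hsub : max r s - min r s ≤ dist f g :=
    (max_sub_min_eq_abs' r s).trans_le (abs_sub_le_dist_of_totalContribution_eq hr hs hpos heq)
  exact ⟨by linarith, hdist⟩

end PseudoMetricSpace

section DualValues

variable {X : Type*} [PseudoMetricSpace X] {C : Finset X} {c f : X} {r : ℝ} {α : X → ℝ}

theorem le_sq_div_of_contributes {a x D κ : ℝ} (hκ : 0 ≤ κ) (hκD : κ ≤ D)
    (ha : a ≤ max (r ^ 2) (x ^ 2) / D) (hx : x ^ 2 < κ * a) : a ≤ r ^ 2 / D := by
  have ha0 : 0 < a := pos_of_mul_pos_right ((sq_nonneg x).trans_lt hx) hκ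
  have hκ0 : 0 < κ := pos_of_mul_pos_left ((sq_nonneg x).trans_lt hx) ha0.le
  have hD : 0 < D := hκ0.trans_le hκD
  have hxD : x ^ 2 < a * D := hx.trans_le (by rw [mul_comm]; gcongr)
  rw [le_div_iff₀ hD] at ha ⊢
  exact (le_max_iff.1 ha).resolve_right hxD.not_ge

theorem le_sq_or_le_mul_sq_div_of_near {a t D Q : ℝ} (hQ : 0 ≤ Q) (hr : 0 ≤ r)
    (hpos : 0 < totalContribution C f r)
    (hα : ∀ c' ∈ C, α c' ≤ max (r ^ 2) (dist c' f ^ 2) / D)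
    (hnear : ∀ c' ∈ C, dist c c' ≤ 2 * √t → a ≤ Q * α c') (hcost : dist c f ^ 2 < t) :
    t ≤ r ^ 2 ∨ a ≤ Q * (r ^ 2 / D) := by
  refine (le_or_gt t (r ^ 2)).imp_right fun hrt => ?_
  obtain ⟨c', hc', hc'f, hcc'⟩ := exists_mem_dist_lt_and_dist_lt_two_mul_sqrt hr hpos hcost hrt
  have hmax : max (r ^ 2) (dist c' f ^ 2) = r ^ 2 :=
    max_eq_left (pow_le_pow_left₀ dist_nonneg hc'f.le 2)
  calc a ≤ Q * α c' := hnear c' hc' hcc'.le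
    _ ≤ Q * (r ^ 2 / D) := by gcongr; exact hmax ▸ hα c' hc'

theorem two_mul_sqrt_upperDual_le {Γ a b : ℝ} (hΓ : 0 < Γ) (hab : a ≤ b / (2 * Γ ^ 2)) :
    2 * √(Γ ^ 2 * (8 * Γ ^ 8 * a)) ≤ 4 * Γ ^ 4 * √b := by
  have hle : Γ ^ 2 * (8 * Γ ^ 8 * a) ≤ (2 * Γ ^ 4) ^ 2 * b := by
    calc Γ ^ 2 * (8 * Γ ^ 8 * a) ≤ Γ ^ 2 * (8 * Γ ^ 8 * (b / (2 * Γ ^ 2))) := by gcongr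
      _ = (2 * Γ ^ 4) ^ 2 * b := by field_simp; ring
  calc 2 * √(Γ ^ 2 * (8 * Γ ^ 8 * a)) ≤ 2 * √((2 * Γ ^ 4) ^ 2 * b) := by gcongr
    _ = 4 * Γ ^ 4 * √b := by
      rw [Real.sqrt_mul (sq_nonneg _), Real.sqrt_sq (by positivity)]
      ring

theorem unproblematic_dual_le {αstar : X → ℝ} {Γ : ℝ} (hΓ : 1 ≤ Γ) (hr : 0 ≤ r)
    (hpos : 0 < totalContribution C f r)
    (hα : ∀ c' ∈ C, α c' ≤ max (r ^ 2) (dist c' f ^ 2) / (2 * Γ ^ 2))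
    (hαc : α c ≤ αstar c / (2 * Γ ^ 2))
    (hnot : ¬ ∃ c' ∈ C, dist c c' ≤ 4 * Γ ^ 4 * √(αstar c) ∧ α c' ≤ α c / (8 * Γ ^ 4))
    (hcost : dist c f ^ 2 < Γ ^ 2 * (8 * Γ ^ 8 * α c)) :
    8 * Γ ^ 8 * α c ≤ 128 * Γ ^ 12 * r ^ 2 := by
  have hΓ0 : 0 < Γ := by linarith
  have hnear : ∀ c' ∈ C, dist c c' ≤ 2 * √(Γ ^ 2 * (8 * Γ ^ 8 * α c)) →
      α c ≤ 8 * Γ ^ 4 * α c' := fun c' hc' hdist => by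
    by_contra! hlt
    exact hnot ⟨c', hc', hdist.trans (two_mul_sqrt_upperDual_le hΓ0 hαc),
      (le_div_iff₀' (by positivity)).2 hlt.le⟩
  rcases le_sq_or_le_mul_sq_div_of_near (by positivity) hr hpos hα hnear hcost with hle | hle
  · have hΓ2 : 1 ≤ Γ ^ 2 := one_le_pow₀ hΓ
    have hα1 : 0 < 8 * Γ ^ 8 * α c :=
      pos_of_mul_pos_right ((sq_nonneg _).trans_lt hcost) (sq_nonneg Γ)
    calc 8 * Γ ^ 8 * α c ≤ Γ ^ 2 * (8 * Γ ^ 8 * α c) := le_mul_of_one_le_left hα1.le hΓ2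
      _ ≤ r ^ 2 := hle
      _ ≤ 128 * Γ ^ 12 * r ^ 2 :=
        le_mul_of_one_le_left (sq_nonneg r) (by linarith [one_le_pow₀ (n := 12) hΓ])
  · calc 8 * Γ ^ 8 * α c ≤ 8 * Γ ^ 8 * (8 * Γ ^ 4 * (r ^ 2 / (2 * Γ ^ 2))) := by gcongr
      _ = 32 * Γ ^ 10 * r ^ 2 := by field_simp; ring
      _ ≤ 128 * Γ ^ 12 * r ^ 2 := by gcongr <;> norm_num

theorem problematic_dual_le {Γ : ℝ} (hΓ : 1 ≤ Γ)
    (hα : α c ≤ max (r ^ 2) (dist c f ^ 2) / (2 * Γ ^ 2))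
    (hcost : dist c f ^ 2 < Γ ^ 2 * α c) : α c ≤ 128 * Γ ^ 12 * r ^ 2 := by
  have hΓ2 : 1 ≤ Γ ^ 2 := one_le_pow₀ hΓ
  calc α c ≤ r ^ 2 / (2 * Γ ^ 2) :=
        le_sq_div_of_contributes (sq_nonneg Γ) (by linarith) hα hcost
    _ ≤ r ^ 2 := div_le_self (sq_nonneg r) (by linarith)
    _ ≤ 128 * Γ ^ 12 * r ^ 2 :=
      le_mul_of_one_le_left (sq_nonneg r) (by linarith [one_le_pow₀ (n := 12) hΓ])

end DualValues

theorem two_mul_sqrt_sq_mul_pow_twelve {Γ : ℝ} (hΓ : 0 ≤ Γ) :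
    2 * √(Γ ^ 2 * (128 * Γ ^ 12)) = 16 * √2 * Γ ^ 7 := by
  rw [show Γ ^ 2 * (128 * Γ ^ 12) = (8 * Γ ^ 7) ^ 2 * 2 by ring, Real.sqrt_mul (sq_nonneg _),
    Real.sqrt_sq (by positivity)]
  ring

theorem contributing_client_same_radius_general {X : Type*} [PseudoMetricSpace X]
    {F C : Finset X} (hF : F.Nonempty) {lam : ℝ} (hlam : 0 < lam) {Γ : ℝ} (hΓ : 1 ≤ Γ)
    {r : X → ℝ} (hr0 : ∀ f ∈ F, 0 ≤ r f) (hr : ∀ f ∈ F, totalContribution C f (r f) = lam)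
    {αstar : X → ℝ}
    (hαstar : ∀ c, αstar c = F.inf' hF (fun f => max (r f ^ 2) (dist c f ^ 2)))
    {α0 : X → ℝ} (hα0 : ∀ c ∈ C, α0 c ≤ αstar c / (2 * Γ ^ 2)) {C' : Set X}
    (hprob : ∀ c ∈ C, (∃ c' ∈ C, dist c c' ≤ 4 * Γ ^ 4 * √(αstar c) ∧
      α0 c' ≤ α0 c / (8 * Γ ^ 4)) → c ∈ C')
    {α1 : X → ℝ} (hα1prob : ∀ c ∈ C, c ∈ C' → α1 c = α0 c)
    (hα1ok : ∀ c ∈ C, c ∉ C' → α1 c = 8 * Γ ^ 8 * α0 c) {c : X} (hc : c ∈ C)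
    {f f' : X} (hf : f ∈ F) (hf' : f' ∈ F) (hcf : dist c f ^ 2 < Γ ^ 2 * α1 c)
    (hcf' : dist c f' ^ 2 < Γ ^ 2 * α1 c) :
    max (r f) (r f') ≤ (1 + 16 * √2 * Γ ^ 7) * min (r f) (r f') ∧
      dist f f' ≤ 2 * √(Γ ^ 2 * (128 * Γ ^ 12)) * min (r f) (r f') := by
  have hpos : ∀ g ∈ F, 0 < totalContribution C g (r g) := fun g hg => hlam.trans_eq (hr g hg).symm
  have hα0_le : ∀ g ∈ F, ∀ c' ∈ C, α0 c' ≤ max (r g ^ 2) (dist c' g ^ 2) / (2 * Γ ^ 2) :=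
    fun g hg c' hc' => (hα0 c' hc').trans <| by
      rw [hαstar]; gcongr; exact Finset.inf'_le (fun g => max (r g ^ 2) (dist c' g ^ 2)) hg
  have hα1_le : ∀ g ∈ F, dist c g ^ 2 < Γ ^ 2 * α1 c → α1 c ≤ 128 * Γ ^ 12 * r g ^ 2 := by
    intro g hg hcg
    by_cases hcC' : c ∈ C'
    · rw [hα1prob c hc hcC'] at hcg ⊢
      exact problematic_dual_le hΓ (hα0_le g hg c hc) hcg
    · rw [hα1ok c hc hcC'] at hcg ⊢
      exact unproblematic_dual_le hΓ (hr0 g hg) (hpos g hg) (hα0_le g hg) (hα0 c hc)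
        (mt (hprob c hc) hcC') hcg
  have hmin : Γ ^ 2 * α1 c ≤ Γ ^ 2 * (128 * Γ ^ 12) * min (r f) (r f') ^ 2 := by
    rw [mul_assoc]
    gcongr
    rcases min_choice (r f) (r f') with h | h <;> rw [h]
    exacts [hα1_le f hf hcf, hα1_le f' hf' hcf']
  rw [← two_mul_sqrt_sq_mul_pow_twelve (by linarith)]
  exact max_le_and_dist_le_mul_min (hr0 f hf) (hr0 f' hf') (hpos f hf)
    ((hr f hf).trans (hr f' hf').symm) (hcf.le.trans hmin) (hcf'.le.trans hmin)

/-- Lemma 4.4: if a client `c` κ-approximately contributes (with `κ = Γ²`) to two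
facilities `f` and `f'` w.r.t. the upper dual values `α_{·,1}`, then
`max{r_f, r_{f'}} ≤ ζ · min{r_f, r_{f'}}` with `ζ = 1 + 2√(ρκ) = 1 + 16√2·Γ⁷`
(where `ρ = 128Γ¹²`), and moreover `dist(f,f') ≤ 2√(κρ) · min{r_f, r_{f'}}`. -/
theorem contributing_client_same_radius
    (d : ℕ) (F C : Finset (EuclideanSpace ℝ (Fin d)))
    (hF : F.Nonempty) (hC : C.Nonempty)
    (lam : ℝ) (hlam : 0 < lam)
    (Γ : ℝ) (hΓ : 5 ≤ Γ)
    -- facility radii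
    (r : EuclideanSpace ℝ (Fin d) → ℝ)
    (hr0 : ∀ f ∈ F, 0 ≤ r f)
    (hr : ∀ f ∈ F, ∑ c ∈ C, max 0 (r f ^ 2 - dist c f ^ 2) = lam)
    -- `α_c^* = min_{f∈F} max{r_f², cost(c,f)}`
    (αstar : EuclideanSpace ℝ (Fin d) → ℝ)
    (hαstar : ∀ c, αstar c = F.inf' hF (fun f => max (r f ^ 2) (dist c f ^ 2)))
    -- initial dual values with `C_D^+ = 8Γ⁴`, `C_D^- = 2Γ²`
    (α0 : EuclideanSpace ℝ (Fin d) → ℝ)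
    (hα0 : ∀ c ∈ C, αstar c / (8 * Γ ^ 4) ≤ α0 c ∧ α0 c ≤ αstar c / (2 * Γ ^ 2))
    -- problematic clients, `γ₁ = 4Γ⁴`, `γ₂ = 9Γ⁴`, `Q = 8Γ⁴`
    (C' : Finset (EuclideanSpace ℝ (Fin d))) (hC'sub : C' ⊆ C)
    (hprob1 : ∀ c ∈ C,
      (∃ c' ∈ C, dist c c' ≤ 4 * Γ ^ 4 * Real.sqrt (αstar c) ∧
        α0 c' ≤ α0 c / (8 * Γ ^ 4)) → c ∈ C')
    (hprob2 : ∀ c ∈ C', ∃ c' ∈ C, dist c c' ≤ 9 * Γ ^ 4 * Real.sqrt (αstar c) ∧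
        α0 c' ≤ α0 c / (8 * Γ ^ 4))
    -- upper dual values, `C_A = 8Γ⁸`
    (α1 : EuclideanSpace ℝ (Fin d) → ℝ)
    (hα1prob : ∀ c ∈ C, c ∈ C' → α1 c = α0 c)
    (hα1ok : ∀ c ∈ C, c ∉ C' → α1 c = 8 * Γ ^ 8 * α0 c) :
    ∀ c ∈ C, ∀ f ∈ F, ∀ f' ∈ F,
      dist c f ^ 2 < Γ ^ 2 * α1 c → dist c f' ^ 2 < Γ ^ 2 * α1 c →
      max (r f) (r f') ≤ (1 + 16 * Real.sqrt 2 * Γ ^ 7) * min (r f) (r f') ∧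
      dist f f' ≤ 2 * Real.sqrt (Γ ^ 2 * (128 * Γ ^ 12)) * min (r f) (r f') :=
  fun _ hc _ hf _ hf' hcf hcf' => contributing_client_same_radius_general (C' := C') hF hlam
    (by linarith) hr0 hr hαstar (fun c hc => (hα0 c hc).2) hprob1 hα1prob hα1ok hc hf hf' hcf hcf'
end

section
/- Let C be a finite set of points in ℝ^d, let f, f' ∈ ℝ^d, let r ≥ 0, and set r' := r + 2·‖f − f'‖. Then ∑_{c∈C} [r'² − ‖c − f'‖²]⁺ ≥ ∑_{c∈C} [r² − ‖c − f‖²]⁺. (Key inequality in the proof of the lemma on radii of facilities sharing a contributing client: the ball of radius r around f witnesses at least as much payment toward f' at radius r + 2·dist(f,f').) -/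
/-! Put `D = dist f f'`. For a convex monotone `φ` on `[0, ∞)` and `x ≤ r`, the increment of `φ`
over `[x, r]` grows when the interval is translated by `D`, and `dist c f' ≤ dist c f + D`. Hence
`φ r - φ (dist c f) ≤ φ (r + D) - φ (dist c f')` for every point `c` of the ball of radius `r`
around `f`; the other points pay nothing towards `f`. The theorem is the case `φ x = x ^ 2`, for
which the shift `r + D` would already suffice in place of `r + 2 * D`. -/

open Set

theorem convexOn_map_add_map_add_sub_le {𝕜 E β : Type*} [Semiring 𝕜] [PartialOrder 𝕜]
    [AddCommGroup E] [Module 𝕜 E] [AddCommMonoid β] [PartialOrder β] [IsOrderedAddMonoid β]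
    [Module 𝕜 β] {s : Set E} {φ : E → β} (hφ : ConvexOn 𝕜 s φ) {x y z : E} (hx : x ∈ s)
    (hz : z ∈ s) (hy : y ∈ segment 𝕜 x z) : φ y + φ (x + z - y) ≤ φ x + φ z := by
  obtain ⟨a, b, ha, hb, hab, rfl⟩ := hy
  have hreflect : x + z - (a • x + b • z) = b • x + a • z := by
    rw [sub_eq_iff_eq_add]
    calc x + z = (a + b) • x + (a + b) • z := by rw [hab, one_smul, one_smul]
      _ = b • x + a • z + (a • x + b • z) := by simp only [add_smul]; abel
  calc φ (a • x + b • z) + φ (x + z - (a • x + b • z))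
      ≤ (a • φ x + b • φ z) + (b • φ x + a • φ z) := by
        rw [hreflect]
        exact add_le_add (hφ.2 hx hz ha hb hab) (hφ.2 hx hz hb ha (by rwa [add_comm]))
    _ = (a + b) • φ x + (a + b) • φ z := by simp only [add_smul]; abel
    _ = φ x + φ z := by rw [hab, one_smul, one_smul]

theorem convexOn_sub_le_sub_add_right {𝕜 β : Type*} [Field 𝕜] [LinearOrder 𝕜]
    [IsStrictOrderedRing 𝕜] [AddCommGroup β] [PartialOrder β] [IsOrderedAddMonoid β] [Module 𝕜 β]
    {s : Set 𝕜} {φ : 𝕜 → β} (hφ : ConvexOn 𝕜 s φ) {x r t : 𝕜} (hx : x ∈ s) (hrt : r + t ∈ s)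
    (hxr : x ≤ r) (ht : 0 ≤ t) : φ r - φ x ≤ φ (r + t) - φ (x + t) := by
  have hr : r ∈ segment 𝕜 x (r + t) := by
    rw [segment_eq_Icc (le_add_of_le_of_nonneg hxr ht)]
    exact ⟨hxr, le_add_of_nonneg_right ht⟩
  have hsum := convexOn_map_add_map_add_sub_le hφ hx hrt hr
  rw [show x + (r + t) - r = x + t by ring] at hsum
  rwa [sub_le_sub_iff, add_comm (φ (r + t))]

section Payment

variable {X : Type*} [PseudoMetricSpace X] {φ : ℝ → ℝ} {f f' : X} {r R : ℝ}

theorem sub_comp_dist_le_sub_comp_dist (hconv : ConvexOn ℝ (Ici 0) φ)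
    (hmono : MonotoneOn φ (Ici 0)) (hR : r + dist f f' ≤ R) {c : X} (hc : dist c f ≤ r) :
    φ r - φ (dist c f) ≤ φ R - φ (dist c f') := by
  have hshift : 0 ≤ r + dist f f' := add_nonneg (dist_nonneg.trans hc) dist_nonneg
  calc φ r - φ (dist c f)
      ≤ φ (r + dist f f') - φ (dist c f + dist f f') :=
        convexOn_sub_le_sub_add_right hconv dist_nonneg hshift hc dist_nonneg
    _ ≤ φ R - φ (dist c f') :=
        sub_le_sub (hmono hshift (hshift.trans hR) hR)
          (hmono dist_nonneg (add_nonneg dist_nonneg dist_nonneg) (dist_triangle c f f'))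

theorem max_zero_sub_comp_dist_le (hconv : ConvexOn ℝ (Ici 0) φ) (hmono : MonotoneOn φ (Ici 0))
    (hr : 0 ≤ r) (hR : r + dist f f' ≤ R) (c : X) :
    max 0 (φ r - φ (dist c f)) ≤ max 0 (φ R - φ (dist c f')) := by
  obtain hc | hc := le_total (dist c f) r
  · exact max_le_max_left 0 (sub_comp_dist_le_sub_comp_dist hconv hmono hR hc)
  · rw [max_eq_left (sub_nonpos.mpr (hmono hr dist_nonneg hc))]
    exact le_max_left _ _

theorem ball_payment_shift_general (C : Finset X) (hconv : ConvexOn ℝ (Ici 0) φ)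
    (hmono : MonotoneOn φ (Ici 0)) (hr : 0 ≤ r) (hR : r + dist f f' ≤ R) :
    ∑ c ∈ C, max 0 (φ r - φ (dist c f)) ≤ ∑ c ∈ C, max 0 (φ R - φ (dist c f')) :=
  Finset.sum_le_sum fun c _ => max_zero_sub_comp_dist_le hconv hmono hr hR c

end Payment

/-- Key inequality in the proof that facilities sharing a contributing client have
comparable radii: with `r' := r + 2·‖f − f'‖`, the payment witnessed toward `f'`
at radius `r'` is at least the payment witnessed toward `f` at radius `r`. -/
theorem ball_payment_shift
    (d : ℕ) (C : Finset (EuclideanSpace ℝ (Fin d)))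
    (f f' : EuclideanSpace ℝ (Fin d)) (r : ℝ) (hr : 0 ≤ r) :
    ∑ c ∈ C, max 0 (r ^ 2 - ‖c - f‖ ^ 2)
      ≤ ∑ c ∈ C, max 0 ((r + 2 * ‖f - f'‖) ^ 2 - ‖c - f'‖ ^ 2) := by
  simp only [← dist_eq_norm]
  exact ball_payment_shift_general C (convexOn_pow 2) pow_left_monotoneOn hr
    (by gcongr; exact le_mul_of_one_le_left dist_nonneg one_le_two)
end

section
/- Let C be a finite nonempty set of points in ℝ^d and λ > 0. For f ∈ ℝ^d let r_f be the unique nonnegative real with ∑_{c∈C} [r_f² − ‖c − f‖²]⁺ = λ. Then for any two points f, f' ∈ ℝ^d, r_{f'} ≤ r_f + 2·‖f − f'‖. -/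
/-!
When a facility moves from `f` to `f'`, enlarging its radius by `dist f f'` compensates every
client: if `a = dist c f ≤ r` and `δ = dist f f'`, then
`(r + δ)² - dist c f' ² ≥ (r + δ)² - (a + δ)² = r² - a² + 2δ(r - a) ≥ r² - a²`.
So the total payment collected at `f'` with radius `r_f + δ` is at least `λ > 0`. Payments are
strictly increasing in the radius wherever they are positive, which forces `r_{f'} ≤ r_f + δ`:
the constant `2` improves to `1`.
-/

section FacilityPayment

variable {X : Type*} [PseudoMetricSpace X]

/-- The total payment `∑_{c ∈ C} [r² - dist(c, f)²]⁺` that the clients `C` offer to a facility at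
`f` of radius `r`. The facility radius `r_f` is the nonnegative solution `r` of
`facilityPayment C f r = λ`; as the formula is even in `r`, the lemmas on it take `0 ≤ r`. -/
def facilityPayment (C : Finset X) (f : X) (r : ℝ) : ℝ :=
  ∑ c ∈ C, max 0 (r ^ 2 - dist c f ^ 2)

theorem sq_sub_dist_sq_le_sq_add_dist_sub_dist_sq {c f : X} {r : ℝ} (hr : dist c f ≤ r) (f' : X) :
    r ^ 2 - dist c f ^ 2 ≤ (r + dist f f') ^ 2 - dist c f' ^ 2 := by
  have htri : dist c f' ^ 2 ≤ (dist c f + dist f f') ^ 2 := by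
    gcongr
    exact dist_triangle c f f'
  have hgain : 0 ≤ dist f f' * (r - dist c f) := mul_nonneg dist_nonneg (sub_nonneg.2 hr)
  linarith

theorem facilityPayment_le_facilityPayment_add_dist (C : Finset X) (f f' : X) {r : ℝ}
    (hr : 0 ≤ r) : facilityPayment C f r ≤ facilityPayment C f' (r + dist f f') := by
  refine Finset.sum_le_sum fun c _ ↦ max_le (le_max_left _ _) ?_
  rcases le_total (dist c f) r with hin | hout
  · exact le_max_of_le_right (sq_sub_dist_sq_le_sq_add_dist_sub_dist_sq hin f')
  · exact le_max_of_le_left (sub_nonpos.2 (pow_le_pow_left₀ hr hout 2))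

theorem facilityPayment_lt_facilityPayment {C : Finset X} {f : X} {r s : ℝ} (hr : 0 ≤ r)
    (hpos : 0 < facilityPayment C f r) (hrs : r < s) :
    facilityPayment C f r < facilityPayment C f s := by
  have hterm (c : X) : r ^ 2 - dist c f ^ 2 < s ^ 2 - dist c f ^ 2 :=
    sub_lt_sub_right (pow_lt_pow_left₀ hrs hr two_ne_zero) _
  obtain ⟨c, hc, hcpos⟩ : ∃ c ∈ C, 0 < max 0 (r ^ 2 - dist c f ^ 2) :=
    (Finset.sum_pos_iff_of_nonneg fun _ _ ↦ le_max_left _ _).1 hpos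
  have hcpos' : 0 < r ^ 2 - dist c f ^ 2 := (lt_max_iff.1 hcpos).resolve_left (lt_irrefl 0)
  exact Finset.sum_lt_sum (fun c _ ↦ max_le_max le_rfl (hterm c).le)
    ⟨c, hc, (max_eq_right hcpos'.le).trans_lt (lt_max_of_lt_right (hterm c))⟩

theorem le_add_dist_of_facilityPayment_le {C : Finset X} {f f' : X} {r r' : ℝ} (hr : 0 ≤ r)
    (hpos : 0 < facilityPayment C f r) (hle : facilityPayment C f' r' ≤ facilityPayment C f r) :
    r' ≤ r + dist f f' := by
  by_contra! hlt
  have hmove : facilityPayment C f r ≤ facilityPayment C f' (r + dist f f') :=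
    facilityPayment_le_facilityPayment_add_dist C f f' hr
  have hgrow : facilityPayment C f' (r + dist f f') < facilityPayment C f' r' :=
    facilityPayment_lt_facilityPayment (add_nonneg hr dist_nonneg) (hpos.trans_le hmove) hlt
  exact (hmove.trans_lt hgrow).not_ge hle

theorem radius_lipschitz_general {C : Finset X} {lam : ℝ} (hlam : 0 < lam) {r : X → ℝ}
    (hr0 : ∀ f, 0 ≤ r f) (hr : ∀ f, facilityPayment C f (r f) = lam) : LipschitzWith 1 r :=
  LipschitzWith.of_le_add fun f' f ↦ by
    rw [dist_comm]
    exact le_add_dist_of_facilityPayment_le (hr0 f) (hlam.trans_eq (hr f).symm)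
      ((hr f').trans (hr f).symm).le

end FacilityPayment

/-- The facility radius `r_f`, defined as the unique nonnegative real with
`∑_{c∈C} [r_f² − ‖c−f‖²]⁺ = λ`, satisfies `r_{f'} ≤ r_f + 2·‖f − f'‖` for any two
points `f, f'`. -/
theorem radius_lipschitz
    (d : ℕ) (C : Finset (EuclideanSpace ℝ (Fin d))) (hC : C.Nonempty)
    (lam : ℝ) (hlam : 0 < lam)
    (r : EuclideanSpace ℝ (Fin d) → ℝ)
    (hr0 : ∀ f, 0 ≤ r f)
    (hr : ∀ f, ∑ c ∈ C, max 0 (r f ^ 2 - ‖c - f‖ ^ 2) = lam)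
    (f f' : EuclideanSpace ℝ (Fin d)) :
    r f' ≤ r f + 2 * ‖f - f'‖ := by
  have hlip : LipschitzWith 1 r := radius_lipschitz_general (C := C) hlam hr0 fun f ↦ by
    simpa only [facilityPayment, dist_eq_norm] using hr f
  have hdist : r f' ≤ r f + ‖f' - f‖ := by
    simpa only [NNReal.coe_one, one_mul, dist_eq_norm] using hlip.le_add_mul f' f
  linarith [norm_sub_rev f f', norm_nonneg (f - f')]
end

section
/- Suppose that for every client c ∈ C the initial dual value satisfies α_{c,0} < α_c^*, where α_c^* := min_{f∈F} max{r_f², cost(c,f)}. Then no facility is paid at the initial dual values: for every facility f ∈ F, ∑_{c∈C} [α_{c,0} − cost(c,f)]⁺ < λ. -/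
/-!
Testing the minimum defining `α_c^*` at the facility `f` itself gives
`α_{c,0} - cost(c,f) < [r_f² - cost(c,f)]⁺` for every client. So no client pays more to `f` than it
does at dual value `r_f²`, and a client paying a positive amount there pays strictly less. Such a
client exists because the payments at `r_f²` add up to `λ > 0`.
-/

section GeneralCost

variable {ι κ G : Type*} [AddCommGroup G] [LinearOrder G] [IsOrderedAddMonoid G]

lemma sub_lt_max_zero_sub_iff {a b c : G} : a - c < max 0 (b - c) ↔ a < max b c := by
  rw [← sub_self c, max_sub_sub_right, sub_lt_sub_iff_right, max_comm]

lemma sum_max_zero_lt_sum {s : Finset κ} {x y : κ → G} (hy : ∀ i ∈ s, 0 ≤ y i)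
    (hxy : ∀ i ∈ s, x i < y i) (hsum : 0 < ∑ i ∈ s, y i) :
    ∑ i ∈ s, max 0 (x i) < ∑ i ∈ s, y i := by
  obtain ⟨j, hj, hyj⟩ : ∃ j ∈ s, 0 < y j :=
    Finset.exists_lt_of_sum_lt (by rwa [Finset.sum_const_zero])
  exact Finset.sum_lt_sum (fun i hi => max_le (hy i hi) (hxy i hi).le)
    ⟨j, hj, max_lt hyj (hxy j hj)⟩

theorem no_facility_paid_initially_general {F : Finset ι} {C : Finset κ} (hF : F.Nonempty)
    {cost : κ → ι → G} {lam : G} (hlam : 0 < lam) {sqRadius : ι → G}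
    (hradius : ∀ f ∈ F, ∑ c ∈ C, max 0 (sqRadius f - cost c f) = lam)
    {α₀ : κ → G} (hα₀ : ∀ c ∈ C, α₀ c < F.inf' hF fun f => max (sqRadius f) (cost c f)) :
    ∀ f ∈ F, ∑ c ∈ C, max 0 (α₀ c - cost c f) < lam := by
  intro f hf
  have payment_lt : ∀ c ∈ C, α₀ c - cost c f < max 0 (sqRadius f - cost c f) := fun c hc =>
    sub_lt_max_zero_sub_iff.2 ((Finset.lt_inf'_iff hF).1 (hα₀ c hc) f hf)
  rw [← hradius f hf] at hlam ⊢
  exact sum_max_zero_lt_sum (fun _ _ => le_max_left _ _) payment_lt hlam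

end GeneralCost

/-- If every client's initial dual value satisfies `α_{c,0} < α_c^*`, where
`α_c^* = min_{f∈F} max{r_f², cost(c,f)}`, then no facility is paid at the initial
dual values: `∑_{c∈C} [α_{c,0} − cost(c,f)]⁺ < λ` for every facility `f ∈ F`. -/
theorem no_facility_paid_initially
    (d : ℕ) (F C : Finset (EuclideanSpace ℝ (Fin d)))
    (hF : F.Nonempty) (hC : C.Nonempty)
    (lam : ℝ) (hlam : 0 < lam)
    (r : EuclideanSpace ℝ (Fin d) → ℝ)
    (hr0 : ∀ f ∈ F, 0 ≤ r f)
    (hr : ∀ f ∈ F, ∑ c ∈ C, max 0 (r f ^ 2 - dist c f ^ 2) = lam)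
    (α0 : EuclideanSpace ℝ (Fin d) → ℝ)
    (hα0 : ∀ c ∈ C, α0 c < F.inf' hF (fun f => max (r f ^ 2) (dist c f ^ 2))) :
    ∀ f ∈ F, ∑ c ∈ C, max 0 (α0 c - dist c f ^ 2) < lam :=
  no_facility_paid_initially_general hF hlam hr hα0
end

section
/- Let S ⊆ F, κ ≥ 1, and α : C → ℝ. Define the dependency graph H on vertex set S by joining f ≠ f' whenever there exists a client c ∈ C with κ·α_c > cost(c,f) and κ·α_c > cost(c,f'). Let f₁, f₂ ∈ S be at graph distance at least 4 in H, and let g₁, g₂ ∈ S be such that for i ∈ {1,2}, either g_i = f_i or g_i is adjacent to f_i in H. Then for every α' : C → ℝ with α'_c ≤ κ·α_c for all c, there is no client c ∈ C with both α'_c > cost(c,g₁) and α'_c > cost(c,g₂). (This is Property (II) in the dual-feasibility lemma: each client contributes to the opening cost of at most one opened facility, since opened facilities lie within one hop of cluster centers that are pairwise at distance ≥ 4 in H.) -/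
theorem edist_le_add_edist_add_edist {V : Type*} (G : SimpleGraph V) (u v w x : V) :
    G.edist u x ≤ G.edist u v + G.edist v w + G.edist w x :=
  calc G.edist u x
    _ ≤ G.edist u w + G.edist w x := SimpleGraph.edist_triangle
    _ ≤ G.edist u v + G.edist v w + G.edist w x := by gcongr; exact SimpleGraph.edist_triangle

section DependencyGraph

variable {V ι R : Type*}

/-- The dependency graph of the facilities `S` and the clients `C`: two distinct facilities are
adjacent when the budget `β c` of a common client `c` exceeds its cost to both of them. Points
outside `S` are isolated vertices. In facility location `β` is the scaled dual solution `κ • α`. -/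
def dependencyGraph [LT R] (S : Set V) (C : Set ι) (cost : ι → V → R) (β : ι → R) :
    SimpleGraph V where
  Adj f f' := f ≠ f' ∧ f ∈ S ∧ f' ∈ S ∧ ∃ c ∈ C, cost c f < β c ∧ cost c f' < β c
  symm := ⟨fun _ _ ⟨hne, hf, hf', c, hc, h, h'⟩ ↦ ⟨hne.symm, hf', hf, c, hc, h', h⟩⟩
  loopless := ⟨fun _ h ↦ h.1 rfl⟩

variable {S : Set V} {C : Set ι} {cost : ι → V → R} {β : ι → R}

theorem dependencyGraph.edist_le_one [LT R] {f f' : V} {c : ι} (hf : f ∈ S) (hf' : f' ∈ S)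
    (hc : c ∈ C) (h : cost c f < β c) (h' : cost c f' < β c) :
    (dependencyGraph S C cost β).edist f f' ≤ 1 := by
  rw [SimpleGraph.edist_le_one_iff_adj_or_eq, or_iff_not_imp_right]
  exact fun hne ↦ ⟨hne, hf, hf', c, hc, h, h'⟩

theorem dependency_graph_separation_general [Preorder R] {β' : ι → R} {f₁ f₂ g₁ g₂ : V}
    (hβ' : ∀ c ∈ C, β' c ≤ β c) (hfar : 4 ≤ (dependencyGraph S C cost β).edist f₁ f₂)
    (hg₁ : g₁ ∈ S) (hg₂ : g₂ ∈ S)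
    (hfg₁ : g₁ = f₁ ∨ (dependencyGraph S C cost β).Adj f₁ g₁)
    (hfg₂ : g₂ = f₂ ∨ (dependencyGraph S C cost β).Adj f₂ g₂) :
    ¬ ∃ c ∈ C, cost c g₁ < β' c ∧ cost c g₂ < β' c := by
  rintro ⟨c, hc, h₁, h₂⟩
  set H := dependencyGraph S C cost β
  have hfg₁_le : H.edist f₁ g₁ ≤ 1 :=
    SimpleGraph.edist_le_one_iff_adj_or_eq.2 (hfg₁.symm.imp_right Eq.symm)
  have hgg_le : H.edist g₁ g₂ ≤ 1 :=
    dependencyGraph.edist_le_one hg₁ hg₂ hc (h₁.trans_le (hβ' c hc)) (h₂.trans_le (hβ' c hc))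
  have hgf₂_le : H.edist g₂ f₂ ≤ 1 :=
    SimpleGraph.edist_le_one_iff_adj_or_eq.2 (hfg₂.symm.imp_left SimpleGraph.Adj.symm)
  refine hfar.not_gt ?_
  calc H.edist f₁ f₂
    _ ≤ H.edist f₁ g₁ + H.edist g₁ g₂ + H.edist g₂ f₂ := edist_le_add_edist_add_edist ..
    _ ≤ 1 + 1 + 1 := by gcongr
    _ < 4 := by norm_num

end DependencyGraph


/-- Property (II) of the dual-feasibility lemma: if `f₁, f₂ ∈ S` are at graph
distance at least `4` in the dependency graph `H`, and `g₁, g₂ ∈ S` each equal,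
or are adjacent in `H` to, `f₁` resp. `f₂`, then for any dual values `α'` with
`α'_c ≤ κ·α_c` there is no client contributing to both `g₁` and `g₂`. -/
theorem dependency_graph_separation
    (d : ℕ) (F C S : Finset (EuclideanSpace ℝ (Fin d))) (hS : S ⊆ F)
    (κ : ℝ) (hκ : 1 ≤ κ)
    (α : EuclideanSpace ℝ (Fin d) → ℝ)
    (H : SimpleGraph (EuclideanSpace ℝ (Fin d)))
    (hH : ∀ f f', H.Adj f f' ↔ f ≠ f' ∧ f ∈ S ∧ f' ∈ S ∧
      ∃ c ∈ C, dist c f ^ 2 < κ * α c ∧ dist c f' ^ 2 < κ * α c)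
    (f1 f2 : EuclideanSpace ℝ (Fin d)) (hf1 : f1 ∈ S) (hf2 : f2 ∈ S)
    -- `f₁` and `f₂` are at graph distance at least 4 in `H`
    (hfar : ∀ p : H.Walk f1 f2, 4 ≤ p.length)
    (g1 g2 : EuclideanSpace ℝ (Fin d)) (hg1 : g1 ∈ S) (hg2 : g2 ∈ S)
    (hg1' : g1 = f1 ∨ H.Adj f1 g1) (hg2' : g2 = f2 ∨ H.Adj f2 g2)
    (α' : EuclideanSpace ℝ (Fin d) → ℝ)
    (hα' : ∀ c ∈ C, α' c ≤ κ * α c) :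
    ¬ ∃ c ∈ C, dist c g1 ^ 2 < α' c ∧ dist c g2 ^ 2 < α' c := by
  obtain rfl : H = dependencyGraph S C (fun c f ↦ dist c f ^ 2) (κ • α) := by ext; apply hH
  exact dependency_graph_separation_general hα' (le_iInf fun p ↦ mod_cast hfar p) hg1 hg2 hg1' hg2'
end

section
/- Interpolation between two LMP facility location solutions: let λ₂ > 0, M ≥ 1, integers k₁ ≤ k ≤ k₂ with k₁ < k₂, and set a := (k₂−k)/(k₂−k₁) and b := (k−k₁)/(k₂−k₁), so a, b ≥ 0, a + b = 1 and a·k₁ + b·k₂ = k. Let ᾱ⁽¹⁾, α⁽²⁾ : C → ℝ satisfy ∑_{c∈C}[ᾱ⁽¹⁾_c − cost(c,f)]⁺ ≤ λ₂ and ∑_{c∈C}[α⁽²⁾_c − cost(c,f)]⁺ ≤ λ₂ for all f ∈ F, and let f⁽¹⁾, f⁽²⁾ : C → F be assignments satisfying ∑_{c∈C} cost(c,f⁽¹⁾_c) ≤ M·(∑_{c∈C} ᾱ⁽¹⁾_c − λ₂·k₁) and ∑_{c∈C} cost(c,f⁽²⁾_c) ≤ M·(∑_{c∈C} α⁽²⁾_c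 − λ₂·k₂). Define α_c := a·ᾱ⁽¹⁾_c + b·α⁽²⁾_c. Then (1) for every f ∈ F, ∑_{c∈C}[α_c − cost(c,f)]⁺ ≤ λ₂; and (2) a·∑_{c∈C} cost(c,f⁽¹⁾_c) + b·∑_{c∈C} cost(c,f⁽²⁾_c) ≤ M·(∑_{c∈C} α_c − λ₂·k). -/
/-!
For a fixed facility, dual feasibility says that a convex function of `α` is at most `λ₂`, so it
passes to convex combinations. The approximation inequality `cost ≤ M · (∑ α - λ₂ · k)` is linear in
the triple `(cost, α, k)`, so it may be averaged with the same weights; these are the barycentric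
coordinates of `k` in the interval `[k₁, k₂]`.
-/

theorem convexOn_finset_sum {𝕜 E β ι : Type*} [Semiring 𝕜] [PartialOrder 𝕜] [AddCommMonoid E]
    [AddCommMonoid β] [PartialOrder β] [IsOrderedAddMonoid β] [SMul 𝕜 E] [Module 𝕜 β] {s : Set E}
    (hs : Convex 𝕜 s) (t : Finset ι) {g : ι → E → β} (hg : ∀ i ∈ t, ConvexOn 𝕜 s (g i)) :
    ConvexOn 𝕜 s fun x ↦ ∑ i ∈ t, g i x := by
  simpa only [Finset.sum_fn] using
    Finset.sum_induction g (ConvexOn 𝕜 s) (fun _ _ ↦ ConvexOn.add) (convexOn_const 0 hs) hg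

section DualFeasible

variable {R ι φ : Type*}

/-- The feasible region of the dual of the facility location linear program with clients `C`,
facilities `F`, connection costs `cost` and opening cost `lam`. The dual variables `β_{c,f}` are
eliminated by taking their least possible values `[α_c - cost(c,f)]⁺`. -/
def dualFeasibleSet [AddCommGroup R] [LinearOrder R] (cost : ι → φ → R) (C : Finset ι) (F : Set φ)
    (lam : R) : Set (ι → R) :=
  {α | ∀ f ∈ F, ∑ c ∈ C, max 0 (α c - cost c f) ≤ lam}

theorem convexOn_sum_max_zero_sub [Ring R] [LinearOrder R] [IsStrictOrderedRing R]
    (C : Finset ι) (x : ι → R) :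
    ConvexOn R Set.univ fun α : ι → R ↦ ∑ c ∈ C, max 0 (α c - x c) :=
  convexOn_finset_sum convex_univ C fun c _ ↦ (convexOn_const 0 convex_univ).sup <|
    ((LinearMap.proj c).convexOn convex_univ).sub (concaveOn_const (x c) convex_univ)

theorem convex_dualFeasibleSet [Ring R] [LinearOrder R] [IsStrictOrderedRing R]
    (cost : ι → φ → R) (C : Finset ι) (F : Set φ) (lam : R) :
    Convex R (dualFeasibleSet cost C F lam) := by
  intro α hα β hβ a b ha hb hab f hf
  have hconvex := (convexOn_sum_max_zero_sub C fun c ↦ cost c f).convex_le lam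
  exact (hconvex ⟨trivial, hα f hf⟩ ⟨trivial, hβ f hf⟩ ha hb hab).2

end DualFeasible

theorem add_le_mul_sum_sub_of_le {R ι : Type*} [CommRing R] [PartialOrder R] [IsOrderedRing R]
    {C : Finset ι} {lam M a b x₁ x₂ k₁ k₂ : R} {α₁ α₂ : ι → R} (ha : 0 ≤ a) (hb : 0 ≤ b)
    (h₁ : x₁ ≤ M * (∑ c ∈ C, α₁ c - lam * k₁)) (h₂ : x₂ ≤ M * (∑ c ∈ C, α₂ c - lam * k₂)) :
    a * x₁ + b * x₂ ≤ M * (∑ c ∈ C, (a * α₁ c + b * α₂ c) - lam * (a * k₁ + b * k₂)) :=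
  calc a * x₁ + b * x₂
      ≤ a * (M * (∑ c ∈ C, α₁ c - lam * k₁)) + b * (M * (∑ c ∈ C, α₂ c - lam * k₂)) := by gcongr
    _ = M * (∑ c ∈ C, (a * α₁ c + b * α₂ c) - lam * (a * k₁ + b * k₂)) := by
      rw [Finset.sum_add_distrib, ← Finset.mul_sum, ← Finset.mul_sum]
      ring

section Interpolation

variable {𝕜 : Type*} [Field 𝕜]

theorem sub_div_sub_add_sub_div_sub {x y : 𝕜} (hxy : x ≠ y) (z : 𝕜) :
    (y - z) / (y - x) + (z - x) / (y - x) = 1 := by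
  rw [← add_div, sub_add_sub_cancel, div_self (sub_ne_zero.2 hxy.symm)]

theorem sub_div_sub_mul_add_sub_div_sub_mul {x y : 𝕜} (hxy : x ≠ y) (z : 𝕜) :
    (y - z) / (y - x) * x + (z - x) / (y - x) * y = z := by
  have hsub : y - x ≠ 0 := sub_ne_zero.2 hxy.symm
  field_simp
  ring

variable [LinearOrder 𝕜] [IsStrictOrderedRing 𝕜]

theorem interpolation_lmp_general {ι φ : Type*} (cost : ι → φ → 𝕜) (F : Set φ) (C : Finset ι)
    (lam M : 𝕜) {k k₁ k₂ : 𝕜} (h₁₂ : k₁ < k₂) (hk₁ : k₁ ≤ k) (hk₂ : k ≤ k₂) {a b : 𝕜}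
    (ha : a = (k₂ - k) / (k₂ - k₁)) (hb : b = (k - k₁) / (k₂ - k₁)) {α₁ α₂ : ι → 𝕜}
    (hfeas₁ : ∀ f ∈ F, ∑ c ∈ C, max 0 (α₁ c - cost c f) ≤ lam)
    (hfeas₂ : ∀ f ∈ F, ∑ c ∈ C, max 0 (α₂ c - cost c f) ≤ lam) {f₁ f₂ : ι → φ}
    (hLMP₁ : ∑ c ∈ C, cost c (f₁ c) ≤ M * (∑ c ∈ C, α₁ c - lam * k₁))
    (hLMP₂ : ∑ c ∈ C, cost c (f₂ c) ≤ M * (∑ c ∈ C, α₂ c - lam * k₂)) :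
    (∀ f ∈ F, ∑ c ∈ C, max 0 (a * α₁ c + b * α₂ c - cost c f) ≤ lam) ∧
      a * ∑ c ∈ C, cost c (f₁ c) + b * ∑ c ∈ C, cost c (f₂ c) ≤
        M * (∑ c ∈ C, (a * α₁ c + b * α₂ c) - lam * k) := by
  have ha₀ : 0 ≤ a := ha ▸ div_nonneg (sub_nonneg.2 hk₂) (sub_nonneg.2 h₁₂.le)
  have hb₀ : 0 ≤ b := hb ▸ div_nonneg (sub_nonneg.2 hk₁) (sub_nonneg.2 h₁₂.le)
  have hab : a + b = 1 := by rw [ha, hb, sub_div_sub_add_sub_div_sub h₁₂.ne]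
  have hk : a * k₁ + b * k₂ = k := by rw [ha, hb, sub_div_sub_mul_add_sub_div_sub_mul h₁₂.ne]
  constructor
  · exact convex_dualFeasibleSet cost C F lam hfeas₁ hfeas₂ ha₀ hb₀ hab
  · exact hk ▸ add_le_mul_sum_sub_of_le ha₀ hb₀ hLMP₁ hLMP₂

end Interpolation

/-- Interpolation between two LMP facility location solutions: the convex
combination `α_c = a·ᾱ⁽¹⁾_c + b·α⁽²⁾_c` is dual feasible for opening cost `λ₂`,
and the corresponding convex combination of the connection costs is within a
factor `M` of `∑_c α_c − λ₂·k`. -/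
theorem interpolation_lmp
    (d : ℕ) (F C : Finset (EuclideanSpace ℝ (Fin d)))
    (lam2 M : ℝ) (hlam2 : 0 < lam2) (hM : 1 ≤ M)
    (k k1 k2 : ℕ) (h12 : k1 < k2) (hk1 : k1 ≤ k) (hk2 : k ≤ k2)
    (a b : ℝ)
    (ha : a = ((k2 : ℝ) - k) / ((k2 : ℝ) - k1))
    (hb : b = ((k : ℝ) - k1) / ((k2 : ℝ) - k1))
    (α1 α2 : EuclideanSpace ℝ (Fin d) → ℝ)
    (hfeas1 : ∀ f ∈ F, ∑ c ∈ C, max 0 (α1 c - dist c f ^ 2) ≤ lam2)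
    (hfeas2 : ∀ f ∈ F, ∑ c ∈ C, max 0 (α2 c - dist c f ^ 2) ≤ lam2)
    (f1 f2 : EuclideanSpace ℝ (Fin d) → EuclideanSpace ℝ (Fin d))
    (hf1 : ∀ c ∈ C, f1 c ∈ F) (hf2 : ∀ c ∈ C, f2 c ∈ F)
    (hLMP1 : ∑ c ∈ C, dist c (f1 c) ^ 2 ≤ M * (∑ c ∈ C, α1 c - lam2 * k1))
    (hLMP2 : ∑ c ∈ C, dist c (f2 c) ^ 2 ≤ M * (∑ c ∈ C, α2 c - lam2 * k2)) :
    (∀ f ∈ F, ∑ c ∈ C, max 0 (a * α1 c + b * α2 c - dist c f ^ 2) ≤ lam2) ∧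
    a * ∑ c ∈ C, dist c (f1 c) ^ 2 + b * ∑ c ∈ C, dist c (f2 c) ^ 2 ≤
      M * (∑ c ∈ C, (a * α1 c + b * α2 c) - lam2 * k) :=
  interpolation_lmp_general (fun c f ↦ dist c f ^ 2) F C lam2 M (mod_cast h12) (mod_cast hk1)
    (mod_cast hk2) ha hb hfeas1 hfeas2 hLMP1 hLMP2
end

section
/- For every constant ε > 0 there exists a constant Γ ≥ 1 such that for every dimension d ≥ 1 and every sufficiently large finite set P ⊂ ℝ^d of n points whose pairwise distances all lie in [1, n^6], there exist an edge set E on vertex set P with |E| ≤ n^{1+ε} and positive edge weights w : E → ℝ_{>0} such that: (I) for any two distinct points x, y ∈ P, either E contains an edge e = {x,y} with w(e) ≤ dist(x,y)/2, or there exists z ∈ P with e₁ = {x,z} ∈ E, e₂ = {z,y} ∈ E and w(e₁) + w(e₂) ≤ dist(x,y); and (II) for any two points x, y ∈ P, dist(x,y) ≤ Γ·d_G(x,y), where d_G denotes the weighted shortest-path distance in the graph G = (P, E, w). -/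
/-- The total weight of a walk `l = [x₀, x₁, …, x_k]`, i.e. `∑ w({x_{i-1}, x_i})`. -/
def walkWeight {V : Type*} (w : Sym2 V → ℝ) (l : List V) : ℝ :=
  (List.zipWith (fun a b => w s(a, b)) l l.tail).sum

/-- `l` is a walk in the graph with edge set `E`: all consecutive pairs are edges. -/
def IsWalkIn {V : Type*} (E : Finset (Sym2 V)) (l : List V) : Prop :=
  List.Chain' (fun a b => s(a, b) ∈ E) l

/-!
Fix a scale `r`. Grow a ball around a point `v` in steps of `r`: if `|U| ≤ q ^ k`, then among the
first `k` steps some step multiplies the number of points by at most `q`. Take the larger ball of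
this step as a cluster with centre `v`, delete the smaller ball and repeat. The deleted balls are
disjoint, so the cluster sizes add up to at most `q * |U|`, and points at distance at most `r` share
a cluster of radius `k * r`, so the stars of the clusters connect them by two hops. The union over
the dyadic scales is a two-hop spanner of stretch `4 * k`; with `q = n ^ (ε / 2)`, one factor `q`
pays for the ball growth and another for the logarithmic number of scales. Dividing all lengths by
the stretch makes the two-hop paths short, and by the triangle inequality walks lose only that
factor.
-/

section NeighborhoodCover

variable {α : Type*} [PseudoMetricSpace α] {U : Finset α} {r R : ℝ}

/-- The points of the finite set `U` in the closed ball of radius `ρ` about `v`. -/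
noncomputable def ballIn (U : Finset α) (v : α) (ρ : ℝ) : Finset α :=
  {u ∈ U | dist v u ≤ ρ}

theorem mem_ballIn {v u : α} {ρ : ℝ} : u ∈ ballIn U v ρ ↔ u ∈ U ∧ dist v u ≤ ρ :=
  Finset.mem_filter

theorem ballIn_subset (U : Finset α) (v : α) (ρ : ℝ) : ballIn U v ρ ⊆ U :=
  Finset.filter_subset _ _

theorem mem_ballIn_self {v : α} {ρ : ℝ} (hv : v ∈ U) (hρ : 0 ≤ ρ) : v ∈ ballIn U v ρ :=
  mem_ballIn.2 ⟨hv, (dist_self v).trans_le hρ⟩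

theorem mem_ballIn_add {v x y : α} {ρ : ℝ} (hx : x ∈ ballIn U v ρ) (hy : y ∈ U)
    (hxy : dist x y ≤ r) : y ∈ ballIn U v (ρ + r) :=
  mem_ballIn.2 ⟨hy, (dist_triangle v x y).trans (add_le_add (mem_ballIn.1 hx).2 hxy)⟩

theorem exists_card_ballIn_add_le {q : ℝ} {k : ℕ} {v : α} (hk : 0 < k) (hq : 0 ≤ q) (hr : 0 ≤ r)
    (hU : (U.card : ℝ) ≤ q ^ k) (hv : v ∈ U) :
    ∃ ρ, 0 ≤ ρ ∧ ρ + r ≤ k * r ∧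
      ((ballIn U v (ρ + r)).card : ℝ) ≤ q * (ballIn U v ρ).card := by
  obtain ⟨j, hjk, hj⟩ : ∃ j < k, ((ballIn U v ((j + 1 : ℕ) * r)).card : ℝ) ≤
      q * (ballIn U v (j * r)).card := by
    by_contra! fast
    have growth := geom_lt (u := fun j : ℕ ↦ ((ballIn U v (j * r)).card : ℝ)) hq hk fast
    have one_le : (1 : ℝ) ≤ (ballIn U v ((0 : ℕ) * r)).card := by
      exact_mod_cast Finset.card_pos.2 ⟨v, mem_ballIn_self hv (by simp)⟩
    have le_pow : ((ballIn U v (k * r)).card : ℝ) ≤ q ^ k :=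
      (Nat.cast_le.2 (Finset.card_le_card (ballIn_subset _ _ _))).trans hU
    exact absurd (le_mul_of_one_le_right (pow_nonneg hq k) one_le) (growth.trans_le le_pow).not_ge
  have step : ((j + 1 : ℕ) : ℝ) * r = j * r + r := by push_cast; ring
  refine ⟨j * r, by positivity, ?_, step ▸ hj⟩
  rw [← step]
  gcongr
  exact hjk

/-- A neighbourhood cover of `U`, in the sense of Awerbuch and Peleg: a collection of clusters of
radius at most `R`, such that points at distance at most `r` share a cluster. A cluster is encoded
as a pair of its centre and its set of points; the centre need not belong to the set. -/
structure IsNeighborhoodCover (U : Finset α) (r R : ℝ) (𝒞 : Finset (α × Finset α)) : Prop where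
  center_mem : ∀ c ∈ 𝒞, c.1 ∈ U
  subset : ∀ c ∈ 𝒞, c.2 ⊆ U
  dist_le : ∀ c ∈ 𝒞, ∀ u ∈ c.2, dist c.1 u ≤ R
  exists_mem_mem : ∀ x ∈ U, ∀ y ∈ U, dist x y ≤ r → ∃ c ∈ 𝒞, x ∈ c.2 ∧ y ∈ c.2

theorem IsNeighborhoodCover.insert_ballIn [DecidableEq α] {v : α} {ρ : ℝ}
    {𝒞 : Finset (α × Finset α)} (h : IsNeighborhoodCover (U \ ballIn U v ρ) r R 𝒞)
    (hv : v ∈ U) (hr : 0 ≤ r) (hR : ρ + r ≤ R) :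
    IsNeighborhoodCover U r R (insert (v, ballIn U v (ρ + r)) 𝒞) where
  center_mem := (Finset.forall_mem_insert _ _ _).2
    ⟨hv, fun c hc ↦ Finset.sdiff_subset (h.center_mem c hc)⟩
  subset := (Finset.forall_mem_insert _ _ _).2
    ⟨ballIn_subset _ _ _, fun c hc ↦ (h.subset c hc).trans Finset.sdiff_subset⟩
  dist_le := (Finset.forall_mem_insert _ _ _).2
    ⟨fun _ hu ↦ (mem_ballIn.1 hu).2.trans hR, h.dist_le⟩
  exists_mem_mem x hx y hy hxy := by
    have near {z : α} (hz : z ∈ ballIn U v ρ) : z ∈ ballIn U v (ρ + r) :=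
      mem_ballIn_add hz (ballIn_subset _ _ _ hz) ((dist_self z).trans_le hr)
    by_cases hxB : x ∈ ballIn U v ρ
    · exact ⟨_, Finset.mem_insert_self _ _, near hxB, mem_ballIn_add hxB hy hxy⟩
    by_cases hyB : y ∈ ballIn U v ρ
    · exact ⟨_, Finset.mem_insert_self _ _, mem_ballIn_add hyB hx (dist_comm x y ▸ hxy), near hyB⟩
    obtain ⟨c, hc, hcxy⟩ := h.exists_mem_mem x (Finset.mem_sdiff.2 ⟨hx, hxB⟩) y
      (Finset.mem_sdiff.2 ⟨hy, hyB⟩) hxy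
    exact ⟨c, Finset.mem_insert_of_mem hc, hcxy⟩

theorem exists_isNeighborhoodCover_sum_card_le {q : ℝ} {k : ℕ} (hk : 0 < k) (hq : 0 ≤ q)
    (hr : 0 ≤ r) (hU : (U.card : ℝ) ≤ q ^ k) :
    ∃ 𝒞, IsNeighborhoodCover U r (k * r) 𝒞 ∧ ∑ c ∈ 𝒞, (c.2.card : ℝ) ≤ q * U.card := by
  classical
  induction U using Finset.strongInduction with
  | H U ih =>
  obtain rfl | ⟨v, hv⟩ := U.eq_empty_or_nonempty
  · exact ⟨∅, ⟨by simp, by simp, by simp, by simp⟩, by simp⟩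
  obtain ⟨ρ, hρ, hρk, hcard⟩ := exists_card_ballIn_add_le hk hq hr hU hv
  have hvB : v ∈ ballIn U v ρ := mem_ballIn_self hv hρ
  obtain ⟨𝒞, hcover, hsum⟩ := ih (U \ ballIn U v ρ)
    (Finset.sdiff_ssubset (ballIn_subset _ _ _) ⟨v, hvB⟩)
    ((Nat.cast_le.2 (Finset.card_le_card Finset.sdiff_subset)).trans hU)
  have hnew : (v, ballIn U v (ρ + r)) ∉ 𝒞 := fun hmem ↦
    (Finset.mem_sdiff.1 (hcover.center_mem _ hmem)).2 hvB
  refine ⟨_, hcover.insert_ballIn hv hr hρk, ?_⟩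
  calc ∑ c ∈ insert (v, ballIn U v (ρ + r)) 𝒞, (c.2.card : ℝ)
      = (ballIn U v (ρ + r)).card + ∑ c ∈ 𝒞, (c.2.card : ℝ) := Finset.sum_insert hnew
    _ ≤ q * (ballIn U v ρ).card + q * (U \ ballIn U v ρ).card := add_le_add hcard hsum
    _ = q * U.card := by
      rw [← mul_add, add_comm]
      exact_mod_cast congrArg (fun n : ℕ ↦ q * n)
        (Finset.card_sdiff_add_card_eq_card (ballIn_subset U v ρ))

end NeighborhoodCover

/-- `E` is the edge set of a two-hop spanner of `P` of stretch `c`: any two distinct points are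
adjacent or joined by a path of two edges of length at most `c` times their distance. -/
structure IsTwoHopSpanner {α : Type*} [PseudoMetricSpace α] (P : Finset α) (c : ℝ)
    (E : Finset (Sym2 α)) : Prop where
  not_isDiag_and_mem : ∀ e ∈ E, ¬ e.IsDiag ∧ ∀ v ∈ e, v ∈ P
  edge_or_twoHop : ∀ x ∈ P, ∀ y ∈ P, x ≠ y → s(x, y) ∈ E ∨
    ∃ z ∈ P, s(x, z) ∈ E ∧ s(z, y) ∈ E ∧ dist x z + dist z y ≤ c * dist x y

section StarEdges

variable {α : Type*} [DecidableEq α]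

/-- The edges of the star joining the centre `v` to all other points of `C`. -/
def starEdges (v : α) (C : Finset α) : Finset (Sym2 α) :=
  (C.erase v).image fun u ↦ s(v, u)

theorem mk_mem_starEdges {v u : α} {C : Finset α} (hu : u ∈ C) (huv : u ≠ v) :
    s(v, u) ∈ starEdges v C :=
  Finset.mem_image_of_mem _ (Finset.mem_erase.2 ⟨huv, hu⟩)

theorem card_starEdges_le (v : α) (C : Finset α) : (starEdges v C).card ≤ C.card :=
  Finset.card_image_le.trans (Finset.card_le_card (Finset.erase_subset _ _))

theorem not_isDiag_and_mem_of_mem_starEdges {v : α} {C U : Finset α} (hv : v ∈ U) (hC : C ⊆ U)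
    {e : Sym2 α} (he : e ∈ starEdges v C) : ¬ e.IsDiag ∧ ∀ u ∈ e, u ∈ U := by
  obtain ⟨u, hu, rfl⟩ := Finset.mem_image.1 he
  obtain ⟨huv, huC⟩ := Finset.mem_erase.1 hu
  refine ⟨fun hdiag ↦ huv (Sym2.mk_isDiag_iff.1 hdiag).symm, fun t ht ↦ ?_⟩
  rcases Sym2.mem_iff.1 ht with rfl | rfl
  exacts [hv, hC huC]

/-- The union of the stars of the clusters of `𝒞`, given as pairs of a centre and a point set. -/
def coverEdges (𝒞 : Finset (α × Finset α)) : Finset (Sym2 α) :=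
  𝒞.biUnion fun c ↦ starEdges c.1 c.2

theorem card_coverEdges_le (𝒞 : Finset (α × Finset α)) :
    (coverEdges 𝒞).card ≤ ∑ c ∈ 𝒞, c.2.card :=
  Finset.card_biUnion_le.trans (Finset.sum_le_sum fun c _ ↦ card_starEdges_le c.1 c.2)

variable [PseudoMetricSpace α] {P : Finset α}

theorem IsNeighborhoodCover.not_isDiag_and_mem {r R : ℝ} {𝒞 : Finset (α × Finset α)}
    (h : IsNeighborhoodCover P r R 𝒞) {e : Sym2 α} (he : e ∈ coverEdges 𝒞) :
    ¬ e.IsDiag ∧ ∀ u ∈ e, u ∈ P := by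
  obtain ⟨c, hc, hec⟩ := Finset.mem_biUnion.1 he
  exact not_isDiag_and_mem_of_mem_starEdges (h.center_mem c hc) (h.subset c hc) hec

theorem IsNeighborhoodCover.edge_or_twoHop {r R : ℝ} {𝒞 : Finset (α × Finset α)}
    (h : IsNeighborhoodCover P r R 𝒞) {x y : α} (hx : x ∈ P) (hy : y ∈ P) (hne : x ≠ y)
    (hxy : dist x y ≤ r) :
    s(x, y) ∈ coverEdges 𝒞 ∨ ∃ z ∈ P, s(x, z) ∈ coverEdges 𝒞 ∧ s(z, y) ∈ coverEdges 𝒞 ∧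
      dist x z + dist z y ≤ 2 * R := by
  obtain ⟨⟨v, C⟩, hc, hxC, hyC⟩ := h.exists_mem_mem x hx y hy hxy
  have edge {u : α} (hu : u ∈ C) (huv : u ≠ v) : s(v, u) ∈ coverEdges 𝒞 :=
    Finset.mem_biUnion.2 ⟨(v, C), hc, mk_mem_starEdges hu huv⟩
  obtain rfl | hxv := eq_or_ne x v
  · exact .inl (edge hyC hne.symm)
  obtain rfl | hyv := eq_or_ne y v
  · exact .inl (Sym2.eq_swap ▸ edge hxC hne)
  refine .inr ⟨v, h.center_mem _ hc, Sym2.eq_swap ▸ edge hxC hxv, edge hyC hyv, ?_⟩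
  rw [dist_comm x v, two_mul]
  exact add_le_add (h.dist_le _ hc x hxC) (h.dist_le _ hc y hyC)

theorem isTwoHopSpanner_biUnion_coverEdges {k : ℝ} {L : ℕ} {𝒞 : ℕ → Finset (α × Finset α)}
    (hk : 0 ≤ k)
    (hcover : ∀ i < L, IsNeighborhoodCover P (2 ^ (i + 1)) (k * 2 ^ (i + 1)) (𝒞 i))
    (hdist : ∀ x ∈ P, ∀ y ∈ P, x ≠ y → 1 ≤ dist x y ∧ dist x y < 2 ^ L) :
    IsTwoHopSpanner P (4 * k) ((Finset.range L).biUnion fun i ↦ coverEdges (𝒞 i)) where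
  not_isDiag_and_mem e he := by
    obtain ⟨i, hi, hei⟩ := Finset.mem_biUnion.1 he
    exact (hcover i (Finset.mem_range.1 hi)).not_isDiag_and_mem hei
  edge_or_twoHop x hx y hy hne := by
    obtain ⟨hone, hlt⟩ := hdist x hx y hy hne
    obtain ⟨i, hi, hi'⟩ := exists_nat_pow_near hone one_lt_two
    have hiL : i < L := (pow_lt_pow_iff_right₀ one_lt_two).1 (hi.trans_lt hlt)
    have hsub : coverEdges (𝒞 i) ⊆ (Finset.range L).biUnion fun i ↦ coverEdges (𝒞 i) :=
      Finset.subset_biUnion_of_mem (fun i ↦ coverEdges (𝒞 i)) (Finset.mem_range.2 hiL)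
    have hlen : 2 * (k * 2 ^ (i + 1)) ≤ 4 * k * dist x y :=
      calc 2 * (k * 2 ^ (i + 1)) = 4 * k * 2 ^ i := by ring
        _ ≤ 4 * k * dist x y := by gcongr
    exact ((hcover i hiL).edge_or_twoHop hx hy hne hi'.le).imp (@hsub _)
      fun ⟨z, hz, hxz, hzy, hle⟩ ↦ ⟨z, hz, hsub hxz, hsub hzy, hle.trans hlen⟩

end StarEdges

theorem exists_isTwoHopSpanner_card_le {α : Type*} [PseudoMetricSpace α] {P : Finset α} {q : ℝ}
    {k L : ℕ} (hk : 0 < k) (hq : 0 ≤ q) (hP : (P.card : ℝ) ≤ q ^ k)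
    (hdist : ∀ x ∈ P, ∀ y ∈ P, x ≠ y → 1 ≤ dist x y ∧ dist x y < 2 ^ L) :
    ∃ E, IsTwoHopSpanner P (4 * k) E ∧ (E.card : ℝ) ≤ L * (q * P.card) := by
  classical
  choose 𝒞 hcover hsum using fun i : ℕ ↦ exists_isNeighborhoodCover_sum_card_le
    (r := 2 ^ (i + 1)) hk hq (by positivity) hP
  refine ⟨_, isTwoHopSpanner_biUnion_coverEdges k.cast_nonneg (fun i _ ↦ hcover i) hdist, ?_⟩
  have hcard (i : ℕ) : ((coverEdges (𝒞 i)).card : ℝ) ≤ q * P.card :=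
    le_trans (by exact_mod_cast card_coverEdges_le (𝒞 i)) (hsum i)
  calc (((Finset.range L).biUnion fun i ↦ coverEdges (𝒞 i)).card : ℝ)
      ≤ ∑ i ∈ Finset.range L, ((coverEdges (𝒞 i)).card : ℝ) := by
        exact_mod_cast Finset.card_biUnion_le
    _ ≤ ∑ _i ∈ Finset.range L, q * (P.card : ℝ) := Finset.sum_le_sum fun i _ ↦ hcard i
    _ = L * (q * P.card) := by simp

theorem eventually_natLog_pow_add_one_le_rpow (b m : ℕ) {δ : ℝ} (hδ : 0 < δ) :
    ∀ᶠ n : ℕ in Filter.atTop, (Nat.log b (n ^ m) + 1 : ℝ) ≤ (n : ℝ) ^ δ := by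
  have hsmall : (fun x : ℝ ↦ m / Real.log b * Real.log x + 1) =o[Filter.atTop] fun x ↦ x ^ δ :=
    ((isLittleO_log_rpow_atTop hδ).const_mul_left _).add
      ((Asymptotics.isLittleO_const_left_of_ne one_ne_zero).2
        (tendsto_norm_atTop_atTop.comp (tendsto_rpow_atTop hδ)))
  filter_upwards [tendsto_natCast_atTop_atTop.eventually (hsmall.bound one_pos)] with n hn
  rw [one_mul, Real.norm_of_nonneg (by positivity : (0 : ℝ) ≤ (n : ℝ) ^ δ)] at hn
  calc (Nat.log b (n ^ m) + 1 : ℝ) ≤ Real.logb b ((n ^ m : ℕ) : ℝ) + 1 := by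
        gcongr
        exact Real.natLog_le_logb _ _
    _ = m / Real.log b * Real.log n + 1 := by
        rw [Nat.cast_pow, Real.logb_pow, Real.logb]
        ring
    _ ≤ (n : ℝ) ^ δ := (Real.le_norm_self _).trans hn

theorem exists_isTwoHopSpanner_card_le_rpow (m : ℕ) {ε : ℝ} (hε : 0 < ε) :
    ∃ c : ℝ, 2 ≤ c ∧ ∃ n₀ : ℕ, ∀ {α : Type*} [PseudoMetricSpace α] (P : Finset α), n₀ ≤ P.card →
      (∀ x ∈ P, ∀ y ∈ P, x ≠ y → 1 ≤ dist x y ∧ dist x y ≤ (P.card : ℝ) ^ m) →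
      ∃ E, IsTwoHopSpanner P c E ∧ (E.card : ℝ) ≤ (P.card : ℝ) ^ (1 + ε) := by
  obtain ⟨k, hk⟩ := exists_nat_ge (2 / ε)
  have hkpos : 0 < k := Nat.cast_pos.1 ((by positivity : 0 < 2 / ε).trans_le hk)
  have hexp : 1 ≤ ε / 2 * k := by
    rw [div_le_iff₀ hε] at hk
    linarith
  obtain ⟨n₀, hn₀⟩ := Filter.eventually_atTop.1
    ((eventually_natLog_pow_add_one_le_rpow 2 m (half_pos hε)).and (Filter.eventually_ge_atTop 1))
  refine ⟨4 * k, by linarith [Nat.one_le_cast (α := ℝ).2 hkpos], n₀, fun {α} _ P hP hdist ↦ ?_⟩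
  obtain ⟨hlog, hone⟩ := hn₀ _ hP
  have hpos : (0 : ℝ) < P.card := Nat.cast_pos.2 hone
  have hpow : (P.card : ℝ) ≤ ((P.card : ℝ) ^ (ε / 2)) ^ k := by
    rw [← Real.rpow_mul_natCast hpos.le]
    exact Real.self_le_rpow_of_one_le (Nat.one_le_cast.2 hone) hexp
  have hscale : (P.card : ℝ) ^ m < 2 ^ (Nat.log 2 (P.card ^ m) + 1) := by
    exact_mod_cast Nat.lt_pow_succ_log_self one_lt_two (P.card ^ m)
  obtain ⟨E, hE, hcard⟩ := exists_isTwoHopSpanner_card_le hkpos (by positivity) hpow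
    fun x hx y hy hne ↦ (hdist x hx y hy hne).imp_right fun hle ↦ hle.trans_lt hscale
  refine ⟨E, hE, hcard.trans ?_⟩
  calc ((Nat.log 2 (P.card ^ m) + 1 : ℕ) : ℝ) * ((P.card : ℝ) ^ (ε / 2) * P.card)
      ≤ (P.card : ℝ) ^ (ε / 2) * ((P.card : ℝ) ^ (ε / 2) * P.card) := by
        gcongr
        exact_mod_cast hlog
    _ = (P.card : ℝ) ^ (1 + ε) := by
        rw [show 1 + ε = ε / 2 + (ε / 2 + 1) by ring, Real.rpow_add hpos,
          Real.rpow_add_one hpos.ne']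

section EdgeWeights

variable {α : Type*} [PseudoMetricSpace α]

theorem dist_le_mul_walkWeight {E : Finset (Sym2 α)} {w : Sym2 α → ℝ} {Γ : ℝ}
    (hw : ∀ a b, s(a, b) ∈ E → dist a b ≤ Γ * w s(a, b)) :
    ∀ {l : List α} {x y : α}, l.head? = some x → l.getLast? = some y → IsWalkIn E l →
      dist x y ≤ Γ * walkWeight w l
  | [a], x, y, hx, hy, _ => by
    obtain rfl : a = x := by simpa using hx
    obtain rfl : a = y := by simpa using hy
    simp [walkWeight]
  | a :: b :: l, x, y, hx, hy, hl => by
    obtain rfl : a = x := by simpa using hx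
    obtain ⟨hab, hbl⟩ := List.isChain_cons_cons.1 hl
    have htail : dist b y ≤ Γ * walkWeight w (b :: l) :=
      dist_le_mul_walkWeight hw rfl (by simpa using hy) hbl
    calc dist a y ≤ dist a b + dist b y := dist_triangle a b y
      _ ≤ Γ * w s(a, b) + Γ * walkWeight w (b :: l) := add_le_add (hw a b hab) htail
      _ = Γ * walkWeight w (a :: b :: l) := by simp [walkWeight, mul_add]

/-- The distance between the endpoints of an edge. -/
noncomputable def edgeLength : Sym2 α → ℝ :=
  Sym2.lift ⟨dist, dist_comm⟩

theorem edgeLength_mk (x y : α) : edgeLength s(x, y) = dist x y :=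
  rfl

end EdgeWeights

theorem sparse_graph_approximation_general (m : ℕ) {ε : ℝ} (hε : 0 < ε) :
    ∃ Γ : ℝ, 1 ≤ Γ ∧ ∃ n₀ : ℕ, ∀ {α : Type*} [PseudoMetricSpace α] (P : Finset α), n₀ ≤ P.card →
      (∀ x ∈ P, ∀ y ∈ P, x ≠ y → 1 ≤ dist x y ∧ dist x y ≤ (P.card : ℝ) ^ m) →
      ∃ (E : Finset (Sym2 α)) (w : Sym2 α → ℝ),
        (∀ e ∈ E, ¬ e.IsDiag ∧ ∀ v ∈ e, v ∈ P) ∧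
        (E.card : ℝ) ≤ (P.card : ℝ) ^ (1 + ε) ∧
        (∀ e ∈ E, 0 < w e) ∧
        (∀ x ∈ P, ∀ y ∈ P, x ≠ y →
          (s(x, y) ∈ E ∧ w s(x, y) ≤ dist x y / 2) ∨
          (∃ z ∈ P, s(x, z) ∈ E ∧ s(z, y) ∈ E ∧ w s(x, z) + w s(z, y) ≤ dist x y)) ∧
        (∀ x ∈ P, ∀ y ∈ P, ∀ l : List α, l.head? = some x → l.getLast? = some y →
          IsWalkIn E l → dist x y ≤ Γ * walkWeight w l) := by
  obtain ⟨c, hc, n₀, hspanner⟩ := exists_isTwoHopSpanner_card_le_rpow m hε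
  have hcpos : 0 < c := two_pos.trans_le hc
  refine ⟨c, one_le_two.trans hc, n₀, fun {α} _ P hP hdist ↦ ?_⟩
  obtain ⟨E, hE, hcard⟩ := hspanner P hP hdist
  refine ⟨E, fun e ↦ edgeLength e / c, hE.not_isDiag_and_mem, hcard, fun e he ↦ ?_,
    fun x hx y hy hne ↦ ?_, fun x _ y _ l ↦ dist_le_mul_walkWeight fun a b _ ↦ ?_⟩
  · induction e with
    | _ a b =>
    obtain ⟨hdiag, hmem⟩ := hE.not_isDiag_and_mem _ he
    have hone : 1 ≤ dist a b := (hdist a (hmem a (Sym2.mem_mk_left a b)) b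
      (hmem b (Sym2.mem_mk_right a b)) fun hab ↦ hdiag (Sym2.mk_isDiag_iff.2 hab)).1
    exact div_pos (one_pos.trans_le hone) hcpos
  · simp only [edgeLength_mk]
    refine (hE.edge_or_twoHop x hx y hy hne).imp
      (fun hxy ↦ ⟨hxy, div_le_div_of_nonneg_left dist_nonneg two_pos hc⟩)
      fun ⟨z, hz, hxz, hzy, hle⟩ ↦ ⟨z, hz, hxz, hzy, ?_⟩
    rw [← add_div]
    exact (div_le_iff₀' hcpos).2 hle
  · rw [edgeLength_mk, mul_div_cancel₀ _ hcpos.ne']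

/-- Sparse graph approximation of a Euclidean point set (Lemma 5.4): for every
`ε > 0` there is a constant `Γ ≥ 1` such that every sufficiently large point set
`P ⊂ ℝ^d` with pairwise distances in `[1, n⁶]` admits a weighted graph on `P` with
at most `n^{1+ε}` edges and positive weights such that (I) every pair of distinct
points is connected by an edge of weight `≤ dist(x,y)/2` or a 2-hop path of weight
`≤ dist(x,y)`, and (II) every walk from `x` to `y` has weight at least
`dist(x,y)/Γ`. -/
theorem sparse_graph_approximation :
    ∀ ε : ℝ, 0 < ε → ∃ Γ : ℝ, 1 ≤ Γ ∧ ∃ n₀ : ℕ,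
      ∀ d : ℕ, 1 ≤ d →
      ∀ P : Finset (EuclideanSpace ℝ (Fin d)), n₀ ≤ P.card →
      (∀ x ∈ P, ∀ y ∈ P, x ≠ y →
        1 ≤ dist x y ∧ dist x y ≤ (P.card : ℝ) ^ (6 : ℕ)) →
      ∃ (E : Finset (Sym2 (EuclideanSpace ℝ (Fin d))))
        (w : Sym2 (EuclideanSpace ℝ (Fin d)) → ℝ),
        -- edges are unordered pairs of distinct points of `P`
        (∀ e ∈ E, ¬ e.IsDiag ∧ ∀ v ∈ e, v ∈ P) ∧
        -- at most `n^{1+ε}` edges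
        (E.card : ℝ) ≤ (P.card : ℝ) ^ ((1 : ℝ) + ε) ∧
        -- positive edge weights
        (∀ e ∈ E, 0 < w e) ∧
        -- property (I)
        (∀ x ∈ P, ∀ y ∈ P, x ≠ y →
          (s(x, y) ∈ E ∧ w s(x, y) ≤ dist x y / 2) ∨
          (∃ z ∈ P, s(x, z) ∈ E ∧ s(z, y) ∈ E ∧
            w s(x, z) + w s(z, y) ≤ dist x y)) ∧
        -- property (II): `dist(x,y) ≤ Γ · d_G(x,y)`
        (∀ x ∈ P, ∀ y ∈ P, ∀ l : List (EuclideanSpace ℝ (Fin d)),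
          l.head? = some x → l.getLast? = some y → IsWalkIn E l →
          dist x y ≤ Γ * walkWeight w l) := by
  intro ε hε
  obtain ⟨Γ, hΓ, n₀, h⟩ := sparse_graph_approximation_general 6 hε
  exact ⟨Γ, hΓ, n₀, fun _ _ P ↦ h P⟩
end

section
/- LSH spanner guarantee: let P ⊂ ℝ^d be a finite set of n ≥ 2 points, let D > 0, Γ > 1, p₁, p₂ ∈ (0,1], and let μ be a probability distribution on a finite family H of functions from ℝ^d to a set U such that for all x, y ∈ P: if dist(x,y) ≤ D then μ{h : h(x) = h(y)} ≥ p₁, and if dist(x,y) ≥ Γ·D then μ{h : h(x) = h(y)} ≤ p₂. Let t := ⌈5 ln(n)/p₁⌉ and draw h₁, …, h_t independently according to μ (product measure on H^t). Then: (I) with probability at least 1 − 1/(2n³), for every pair x, y ∈ P with dist(x,y) ≤ D there exists i ∈ {1,…,t} with h_i(x) = h_i(y); and (II) with probability at least 1 − t·p₂·n²/2, there is no pair x, y ∈ P with dist(x,y) ≥ Γ·D and h_i(x) = h_i(y) for some i ∈ {1,…,t}. -/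
open Classical

/-!
A pair that collides under one draw with probability `s ≥ p₁` escapes all `t` independent draws with
probability `(1 - s) ^ t ≤ exp (-p₁ t) ≤ n⁻⁵`, while a pair that collides with probability at most
`p₂` collides under some draw with probability at most `t p₂`. Both parts follow by a union bound
over the `n.choose 2 ≤ n² / 2` unordered pairs of distinct points.
-/

open MeasureTheory

section UnionBound

variable {Ω : Type*} [MeasurableSpace Ω] (ν : Measure Ω)

lemma one_sub_le_measureReal_of_compl_subset [IsProbabilityMeasure ν] {s t : Set Ω} {q : ℝ}
    (hst : sᶜ ⊆ t) (ht : ν.real t ≤ q) : 1 - q ≤ ν.real s := by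
  have hcover : (1 : ℝ) ≤ ν.real s + ν.real t :=
    calc 1 = ν.real (s ∪ sᶜ) := by rw [Set.union_compl_self, probReal_univ]
      _ ≤ ν.real (s ∪ t) := measureReal_mono (Set.union_subset_union_right s hst)
      _ ≤ ν.real s + ν.real t := measureReal_union_le s t
  linarith

lemma measureReal_exists_ne_and_rel_le [IsFiniteMeasure ν] {α : Type*} (P : Finset α)
    (r : α → α → Prop) {B : Ω → α → α → Prop} (hB : ∀ ω, Std.Symm (B ω)) {q : ℝ} (hq : 0 ≤ q)
    (hBq : ∀ x ∈ P, ∀ y ∈ P, r x y → ν.real {ω | B ω x y} ≤ q) :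
    ν.real {ω | ∃ x ∈ P, ∃ y ∈ P, x ≠ y ∧ r x y ∧ B ω x y} ≤ P.card.choose 2 * q := by
  -- Passing to unordered pairs costs nothing as `B ω` is symmetric, and halves the number of pairs.
  let Z : Finset (Sym2 α) := (P.offDiag.filter fun z ↦ r z.1 z.2).image Sym2.mk.uncurry
  let E : Sym2 α → Set Ω := fun z ↦ {ω | z ∈ Sym2.fromRel (hB ω)}
  have hZ : Z.card ≤ P.card.choose 2 := by
    rw [← Sym2.card_image_offDiag]
    exact Finset.card_le_card (Finset.image_subset_image (Finset.filter_subset _ _))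
  have hE : ∀ z ∈ Z, ν.real (E z) ≤ q := by
    intro z hz
    obtain ⟨⟨x, y⟩, hxy, rfl⟩ := Finset.mem_image.mp hz
    rw [Finset.mem_filter, Finset.mem_offDiag] at hxy
    exact hBq x hxy.1.1 y hxy.1.2.1 hxy.2
  have hsub : {ω | ∃ x ∈ P, ∃ y ∈ P, x ≠ y ∧ r x y ∧ B ω x y} ⊆ ⋃ z ∈ Z, E z := by
    rintro ω ⟨x, hx, y, hy, hne, hr, hω⟩
    have hxy : (x, y) ∈ P.offDiag.filter fun z ↦ r z.1 z.2 :=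
      Finset.mem_filter.mpr ⟨Finset.mem_offDiag.mpr ⟨hx, hy, hne⟩, hr⟩
    exact Set.mem_biUnion (x := s(x, y)) (Finset.mem_image_of_mem Sym2.mk.uncurry hxy) hω
  calc ν.real {ω | ∃ x ∈ P, ∃ y ∈ P, x ≠ y ∧ r x y ∧ B ω x y}
      ≤ ν.real (⋃ z ∈ Z, E z) := measureReal_mono hsub (measure_ne_top ν _)
    _ ≤ ∑ z ∈ Z, ν.real (E z) := measureReal_biUnion_finset_le Z E
    _ ≤ Z.card * q := by simpa only [nsmul_eq_mul] using Finset.sum_le_card_nsmul Z _ q hE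
    _ ≤ P.card.choose 2 * q := by gcongr

end UnionBound

section IndependentDraws

variable {ι Ω : Type*} [Fintype ι] [MeasurableSpace Ω] (μ : Measure Ω) [IsProbabilityMeasure μ]

lemma measureReal_pi_forall_notMem {A : Set Ω} (hA : MeasurableSet A) :
    (Measure.pi fun _ : ι ↦ μ).real {g | ∀ i, g i ∉ A} = (1 - μ.real A) ^ Fintype.card ι := by
  have hpi : {g : ι → Ω | ∀ i, g i ∉ A} = Set.univ.pi fun _ ↦ Aᶜ := by
    ext g
    simp only [Set.mem_ofPred_eq, Set.mem_univ_pi, Set.mem_compl_iff]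
  rw [hpi, measureReal_def, Measure.pi_pi, Finset.prod_const, Finset.card_univ, ENNReal.toReal_pow,
    ← measureReal_def, probReal_compl_eq_one_sub hA]

lemma measureReal_pi_forall_notMem_le_exp {A : Set Ω} (hA : MeasurableSet A) {p : ℝ}
    (hp : p ≤ μ.real A) :
    (Measure.pi fun _ : ι ↦ μ).real {g | ∀ i, g i ∉ A} ≤ Real.exp (-(p * Fintype.card ι)) :=
  calc (Measure.pi fun _ : ι ↦ μ).real {g | ∀ i, g i ∉ A}
      = (1 - μ.real A) ^ Fintype.card ι := measureReal_pi_forall_notMem μ hA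
    _ ≤ Real.exp (-p) ^ Fintype.card ι := by
      refine pow_le_pow_left₀ (sub_nonneg.mpr measureReal_le_one) ?_ _
      exact (sub_le_sub_left hp 1).trans (Real.one_sub_le_exp_neg p)
    _ = Real.exp (-(p * Fintype.card ι)) := by
      rw [← Real.exp_nat_mul, mul_neg, mul_comm]

lemma measureReal_pi_eval_mem (A : Set Ω) (i : ι) :
    (Measure.pi fun _ : ι ↦ μ).real {g | g i ∈ A} = μ.real A := by
  have hpi : {g : ι → Ω | g i ∈ A} = (({i} : Finset ι) : Set ι).pi fun _ ↦ A := by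
    rw [Finset.coe_singleton, Set.singleton_pi]
    rfl
  rw [hpi, measureReal_def, Measure.pi_pi_finset, Finset.prod_singleton, ← measureReal_def]

lemma measureReal_pi_exists_mem_le (A : Set Ω) :
    (Measure.pi fun _ : ι ↦ μ).real {g | ∃ i, g i ∈ A} ≤ Fintype.card ι * μ.real A :=
  calc (Measure.pi fun _ : ι ↦ μ).real {g | ∃ i, g i ∈ A}
      = (Measure.pi fun _ : ι ↦ μ).real (⋃ i, {g | g i ∈ A}) := by rw [Set.ofPred_exists]
    _ ≤ ∑ i, (Measure.pi fun _ : ι ↦ μ).real {g | g i ∈ A} := measureReal_iUnion_fintype_le _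
    _ = Fintype.card ι * μ.real A := by
      simp only [measureReal_pi_eval_mem, Finset.sum_const, Finset.card_univ, nsmul_eq_mul]

end IndependentDraws

section FiniteProbabilitySpace

variable {Ω : Type*} [Fintype Ω] [MeasurableSpace Ω] [MeasurableSingletonClass Ω]

lemma exists_isProbabilityMeasure_measureReal_singleton_eq {w : Ω → ℝ} (hw : ∀ ω, 0 ≤ w ω)
    (hw1 : ∑ ω, w ω = 1) :
    ∃ ν : Measure Ω, IsProbabilityMeasure ν ∧ (fun ω ↦ ν.real {ω}) = w := by
  have hsum : ∑ ω, ENNReal.ofReal (w ω) = 1 := by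
    rw [← ENNReal.ofReal_sum_of_nonneg fun ω _ ↦ hw ω, hw1, ENNReal.ofReal_one]
  refine ⟨(PMF.ofFintype _ hsum).toMeasure, inferInstance, funext fun ω ↦ ?_⟩
  rw [measureReal_def, PMF.toMeasure_apply_singleton _ _ (measurableSet_singleton ω),
    PMF.ofFintype_apply, ENNReal.toReal_ofReal (hw ω)]

lemma sum_filter_measureReal_singleton (ν : Measure Ω) [SigmaFinite ν] (A : Ω → Prop)
    [DecidablePred A] : ∑ ω with A ω, ν.real {ω} = ν.real {ω | A ω} := by
  rw [sum_measureReal_singleton, Finset.coe_filter_univ]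

end FiniteProbabilitySpace

lemma prod_measureReal_singleton {ι Ω : Type*} [Fintype ι] [MeasurableSpace Ω] (μ : Measure Ω)
    [SigmaFinite μ] (g : ι → Ω) :
    ∏ i, μ.real {g i} = (Measure.pi fun _ : ι ↦ μ).real {g} := by
  simp only [measureReal_def, Measure.pi_singleton, ENNReal.toReal_prod]

lemma cast_choose_two_le_sq_div_two (n : ℕ) : (n.choose 2 : ℝ) ≤ (n : ℝ) ^ 2 / 2 := by
  simpa only [Nat.factorial_two, Nat.cast_ofNat] using Nat.choose_le_pow_div (α := ℝ) 2 n

lemma exp_neg_le_inv_pow_of_mul_log_le {x a : ℝ} (hx : 0 < x) (k : ℕ) (ha : k * Real.log x ≤ a) :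
    Real.exp (-a) ≤ (x ^ k)⁻¹ := by
  rw [Real.exp_neg, ← Real.exp_log (pow_pos hx k), Real.log_pow]
  gcongr

section HashFamily

variable {ι α H U : Type*} [Fintype ι] [MeasurableSpace H] (μ : Measure H)
  [IsProbabilityMeasure μ] (f : H → α → U) (P : Finset α)

lemma one_sub_le_measureReal_pi_forall_rel_collide [Nonempty ι] (close : α → α → Prop) {p : ℝ}
    (hmeas : ∀ x ∈ P, ∀ y ∈ P, close x y → MeasurableSet {h | f h x = f h y})
    (hclose : ∀ x ∈ P, ∀ y ∈ P, close x y → p ≤ μ.real {h | f h x = f h y}) :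
    1 - P.card.choose 2 * Real.exp (-(p * Fintype.card ι)) ≤
      (Measure.pi fun _ : ι ↦ μ).real
        {g | ∀ x ∈ P, ∀ y ∈ P, close x y → ∃ i, f (g i) x = f (g i) y} := by
  refine one_sub_le_measureReal_of_compl_subset _ ?_
    (measureReal_exists_ne_and_rel_le _ P close (B := fun g x y ↦ ∀ i, f (g i) x ≠ f (g i) y)
      (fun g ↦ ⟨fun x y hxy i ↦ (hxy i).symm⟩) (Real.exp_nonneg _) fun x hx y hy hxy ↦
        measureReal_pi_forall_notMem_le_exp μ (hmeas x hx y hy hxy) (hclose x hx y hy hxy))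
  intro g hg
  simp only [Set.mem_compl_iff, Set.mem_ofPred_eq, not_forall, not_exists] at hg
  obtain ⟨x, hx, y, hy, hxy, hmiss⟩ := hg
  have hne : x ≠ y := by
    rintro rfl
    exact hmiss (Classical.arbitrary ι) rfl
  exact ⟨x, hx, y, hy, hne, hxy, hmiss⟩

lemma one_sub_le_measureReal_pi_not_exists_rel_collide (far : α → α → Prop)
    (hirrefl : ∀ x ∈ P, ¬ far x x) {p : ℝ} (hp : 0 ≤ p)
    (hfar : ∀ x ∈ P, ∀ y ∈ P, far x y → μ.real {h | f h x = f h y} ≤ p) :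
    1 - P.card.choose 2 * (Fintype.card ι * p) ≤
      (Measure.pi fun _ : ι ↦ μ).real
        {g | ¬ ∃ x ∈ P, ∃ y ∈ P, far x y ∧ ∃ i, f (g i) x = f (g i) y} := by
  refine one_sub_le_measureReal_of_compl_subset _ ?_
    (measureReal_exists_ne_and_rel_le _ P far (B := fun g x y ↦ ∃ i, f (g i) x = f (g i) y)
      (fun g ↦ ⟨fun x y ⟨i, hi⟩ ↦ ⟨i, hi.symm⟩⟩) (by positivity) fun x hx y hy hxy ↦
        (measureReal_pi_exists_mem_le μ {h | f h x = f h y}).trans ?_)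
  · intro g hg
    obtain ⟨x, hx, y, hy, hxy, hhit⟩ := not_not.mp hg
    have hne : x ≠ y := by
      rintro rfl
      exact hirrefl x hx hxy
    exact ⟨x, hx, y, hy, hne, hxy, hhit⟩
  · gcongr
    exact hfar x hx y hy hxy

end HashFamily

theorem lsh_spanner_guarantee_general {α H U : Type*} (P : Finset α)
    (hn : 2 ≤ P.card) (close far : α → α → Prop) (hirrefl : ∀ x ∈ P, ¬ far x x) {p1 p2 : ℝ}
    (hp1 : 0 < p1) (hp2 : 0 ≤ p2) (hfun : H → α → U)
    [MeasurableSpace H] (μ : Measure H) [IsProbabilityMeasure μ]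
    (hmeas : ∀ x ∈ P, ∀ y ∈ P, close x y → MeasurableSet {h | hfun h x = hfun h y})
    (hclose : ∀ x ∈ P, ∀ y ∈ P, close x y → p1 ≤ μ.real {h | hfun h x = hfun h y})
    (hfar : ∀ x ∈ P, ∀ y ∈ P, far x y → μ.real {h | hfun h x = hfun h y} ≤ p2)
    {t : ℕ} (ht : 5 * Real.log P.card / p1 ≤ t) :
    (1 - 1 / (2 * (P.card : ℝ) ^ 3) ≤ (Measure.pi fun _ : Fin t ↦ μ).real
      {g | ∀ x ∈ P, ∀ y ∈ P, close x y → ∃ i, hfun (g i) x = hfun (g i) y}) ∧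
    (1 - t * p2 * (P.card : ℝ) ^ 2 / 2 ≤ (Measure.pi fun _ : Fin t ↦ μ).real
      {g | ¬ ∃ x ∈ P, ∃ y ∈ P, far x y ∧ ∃ i, hfun (g i) x = hfun (g i) y}) := by
  have hn1 : (1 : ℝ) < P.card := by exact_mod_cast hn
  have hn0 : (0 : ℝ) < P.card := one_pos.trans hn1
  have hpairs := cast_choose_two_le_sq_div_two P.card
  constructor
  · have hlog : 0 < Real.log P.card := Real.log_pos hn1
    have ht0 : (0 : ℝ) < t := lt_of_lt_of_le (by positivity) ht
    have : Nonempty (Fin t) := Fin.pos_iff_nonempty.mp (by exact_mod_cast ht0)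
    have hmiss : Real.exp (-(p1 * t)) ≤ ((P.card : ℝ) ^ 5)⁻¹ :=
      exp_neg_le_inv_pow_of_mul_log_le hn0 5 ((div_le_iff₀' hp1).mp ht)
    refine le_trans (sub_le_sub_left ?_ 1)
      (one_sub_le_measureReal_pi_forall_rel_collide μ hfun P close hmeas hclose)
    rw [Fintype.card_fin]
    calc P.card.choose 2 * Real.exp (-(p1 * t))
        ≤ (P.card : ℝ) ^ 2 / 2 * ((P.card : ℝ) ^ 5)⁻¹ := by gcongr
      _ = 1 / (2 * (P.card : ℝ) ^ 3) := by field_simp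
  · refine le_trans (sub_le_sub_left ?_ 1)
      (one_sub_le_measureReal_pi_not_exists_rel_collide μ hfun P far hirrefl hp2 hfar)
    rw [Fintype.card_fin]
    calc P.card.choose 2 * (t * p2)
        ≤ (P.card : ℝ) ^ 2 / 2 * (t * p2) := by gcongr
      _ = t * p2 * (P.card : ℝ) ^ 2 / 2 := by ring

/-- LSH spanner guarantee (Lemma 5.1): drawing `t = ⌈5 ln(n)/p₁⌉` hash functions
independently from a `(D, Γ·D, p₁, p₂)`-sensitive family, (I) with probability at
least `1 − 1/(2n³)` every close pair (distance `≤ D`) collides under some hash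
function, and (II) with probability at least `1 − t·p₂·n²/2` no far pair
(distance `≥ Γ·D`) collides under any hash function. -/
theorem lsh_spanner_guarantee
    (d : ℕ) (P : Finset (EuclideanSpace ℝ (Fin d))) (hn : 2 ≤ P.card)
    (D Γ p1 p2 : ℝ) (hD : 0 < D) (hΓ : 1 < Γ)
    (hp1 : 0 < p1) (hp1' : p1 ≤ 1) (hp2 : 0 < p2) (hp2' : p2 ≤ 1)
    (H U : Type) [Fintype H]
    (hfun : H → EuclideanSpace ℝ (Fin d) → U)
    -- `μ` is a probability distribution on the finite family `H`
    (μ : H → ℝ) (hμ0 : ∀ h, 0 ≤ μ h) (hμ1 : ∑ h : H, μ h = 1)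
    -- `(D, Γ·D, p₁, p₂)`-sensitivity
    (hclose : ∀ x ∈ P, ∀ y ∈ P, dist x y ≤ D →
      p1 ≤ ∑ h ∈ Finset.univ.filter (fun h : H => hfun h x = hfun h y), μ h)
    (hfar : ∀ x ∈ P, ∀ y ∈ P, Γ * D ≤ dist x y →
      ∑ h ∈ Finset.univ.filter (fun h : H => hfun h x = hfun h y), μ h ≤ p2) :
    let n : ℕ := P.card
    let t : ℕ := ⌈5 * Real.log n / p1⌉₊
    -- (I)
    (1 - 1 / (2 * (n : ℝ) ^ 3) ≤
      ∑ g ∈ Finset.univ.filter (fun g : Fin t → H =>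
          ∀ x ∈ P, ∀ y ∈ P, dist x y ≤ D → ∃ i, hfun (g i) x = hfun (g i) y),
        ∏ i, μ (g i)) ∧
    -- (II)
    (1 - (t : ℝ) * p2 * (n : ℝ) ^ 2 / 2 ≤
      ∑ g ∈ Finset.univ.filter (fun g : Fin t → H =>
          ¬ ∃ x ∈ P, ∃ y ∈ P, Γ * D ≤ dist x y ∧
            ∃ i, hfun (g i) x = hfun (g i) y),
        ∏ i, μ (g i)) := by
  let _ : MeasurableSpace H := ⊤
  obtain ⟨ν, _, rfl⟩ := exists_isProbabilityMeasure_measureReal_singleton_eq hμ0 hμ1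
  have hirrefl : ∀ x ∈ P, ¬ Γ * D ≤ dist x x := fun x _ ↦ by
    rw [dist_self, not_le]
    positivity
  simp only [prod_measureReal_singleton, sum_filter_measureReal_singleton] at hclose hfar ⊢
  exact lsh_spanner_guarantee_general P hn (dist · · ≤ D) (Γ * D ≤ dist · ·) hirrefl hp1 hp2.le
    hfun ν (fun _ _ _ _ _ ↦ trivial) hclose hfar (Nat.le_ceil _)
end

section
/- Composition identity for ℓ-smallest selections over graph neighborhoods: let G be a graph on a finite vertex set V, let X be a linearly ordered set, let ℓ ≥ 1 be an integer, and for each v ∈ V let A_v ⊆ X be a finite set. For a finite set A ⊆ X, let min_ℓ(A) denote the set of the min(ℓ, |A|) smallest elements of A, and let N^t(u) := {v ∈ V : d_G(u,v) ≤ t} denote the t-hop neighborhood of u (including u). Then for every u ∈ V and every integer t ≥ 1: min_ℓ( ⋃_{v ∈ N¹(u)} min_ℓ( ⋃_{w ∈ N^{t−1}(v)} A_w ) ) = min_ℓ( ⋃_{v ∈ N^t(u)} A_v ). -/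
open Classical

/-- `minl ℓ A` is the set of the `min(ℓ, |A|)` smallest elements of `A`:
an element `a ∈ A` belongs to it iff fewer than `ℓ` elements of `A` are below it. -/
def minl {X : Type*} [LinearOrder X] (ℓ : ℕ) (A : Finset X) : Finset X :=
  A.filter (fun a => (A.filter (fun b => b < a)).card < ℓ)

/-- The `t`-hop neighborhood `N^t(u) = {v : d_G(u,v) ≤ t}` of `u` in `G`
(including `u` itself). -/
noncomputable def hopBall {V : Type*} [Fintype V] (G : SimpleGraph V) (t : ℕ)
    (u : V) : Finset V :=
  Finset.univ.filter (fun v => ∃ p : G.Walk u v, p.length ≤ t)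

section minl

open Finset

variable {X : Type*} [LinearOrder X] {ℓ : ℕ} {A B : Finset X} {x : X}

lemma mem_minl : x ∈ minl ℓ A ↔ x ∈ A ∧ #{b ∈ A | b < x} < ℓ := mem_filter

lemma minl_subset (ℓ : ℕ) (A : Finset X) : minl ℓ A ⊆ A := filter_subset _ _

lemma mem_minl_of_subset (hAB : A ⊆ B) (hxA : x ∈ A) (hxB : x ∈ minl ℓ B) : x ∈ minl ℓ A :=
  mem_minl.2 ⟨hxA, (card_le_card (filter_subset_filter _ hAB)).trans_lt (mem_minl.1 hxB).2⟩

lemma filter_lt_subset_of_minl_subset (hBA : minl ℓ B ⊆ A) (hx : #{b ∈ A | b < x} < ℓ) :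
    {b ∈ B | b < x} ⊆ A := by
  -- The least `y ∈ B \ A` below `x` has all its predecessors in `A`, hence fewer than `ℓ` of them,
  -- so it would lie in `minl ℓ B`.
  by_contra hnot
  obtain ⟨y, hy, hymin⟩ := exists_min_image ({b ∈ B | b < x} \ A) id (sdiff_nonempty.2 hnot)
  obtain ⟨⟨hyB, hyx⟩, hyA⟩ : (y ∈ B ∧ y < x) ∧ y ∉ A := by simpa using hy
  have below_subset : {b ∈ B | b < y} ⊆ {b ∈ A | b < x} := by
    intro z hz
    obtain ⟨hzB, hzy⟩ := mem_filter.1 hz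
    refine mem_filter.2 ⟨?_, hzy.trans hyx⟩
    by_contra hzA
    exact hzy.not_ge (hymin z (by simp [hzB, hzy.trans hyx, hzA]))
  exact hyA (hBA (mem_minl.2 ⟨hyB, (card_le_card below_subset).trans_lt hx⟩))

lemma minl_eq_minl_of_subset_of_subset (hBA : minl ℓ B ⊆ A) (hAB : A ⊆ B) :
    minl ℓ A = minl ℓ B := by
  refine Subset.antisymm (fun x hx ↦ ?_) fun x hx ↦ mem_minl_of_subset hAB (hBA hx) hx
  obtain ⟨hxA, hcard⟩ := mem_minl.1 hx
  have below_subset : {b ∈ B | b < x} ⊆ {b ∈ A | b < x} := fun b hb ↦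
    mem_filter.2 ⟨filter_lt_subset_of_minl_subset hBA hcard hb, (mem_filter.1 hb).2⟩
  exact mem_minl.2 ⟨hAB hxA, (card_le_card below_subset).trans_lt hcard⟩

lemma minl_biUnion_minl {ι : Type*} (ℓ : ℕ) (s : Finset ι) (f : ι → Finset X) :
    minl ℓ (s.biUnion fun i ↦ minl ℓ (f i)) = minl ℓ (s.biUnion f) := by
  apply minl_eq_minl_of_subset_of_subset
  · intro x hx
    obtain ⟨i, hi, hxi⟩ := mem_biUnion.1 (minl_subset _ _ hx)
    exact mem_biUnion.2 ⟨i, hi, mem_minl_of_subset (subset_biUnion_of_mem f hi) hxi hx⟩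
  · exact biUnion_mono fun i _ ↦ minl_subset ℓ (f i)

end minl

section hopBall

variable {V : Type*} [Fintype V] {G : SimpleGraph V} {s t : ℕ} {u v : V}

lemma mem_hopBall : v ∈ hopBall G t u ↔ ∃ p : G.Walk u v, p.length ≤ t := by
  simp [hopBall]

lemma hopBall_add (G : SimpleGraph V) (s t : ℕ) (u : V) :
    hopBall G (s + t) u = (hopBall G s u).biUnion (hopBall G t) := by
  ext w
  simp only [Finset.mem_biUnion, mem_hopBall]
  constructor
  · rintro ⟨p, hp⟩
    exact ⟨p.getVert s, ⟨p.take s, by simp⟩, p.drop s, by simpa [add_comm] using hp⟩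
  · rintro ⟨v, ⟨p, hp⟩, q, hq⟩
    exact ⟨p.append q, by simpa using add_le_add hp hq⟩

end hopBall

theorem minl_neighborhood_composition_general {V X : Type*} [Fintype V] [LinearOrder X]
    (G : SimpleGraph V) (ℓ : ℕ) (A : V → Finset X) (u : V) (s t : ℕ) :
    minl ℓ ((hopBall G s u).biUnion fun v ↦ minl ℓ ((hopBall G t v).biUnion A)) =
      minl ℓ ((hopBall G (s + t) u).biUnion A) := by
  rw [minl_biUnion_minl, hopBall_add, Finset.biUnion_biUnion]

/-- Composition identity for `ℓ`-smallest selections over graph neighborhoods: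
`min_ℓ(⋃_{v∈N¹(u)} min_ℓ(⋃_{w∈N^{t−1}(v)} A_w)) = min_ℓ(⋃_{v∈N^t(u)} A_v)`. -/
theorem minl_neighborhood_composition
    {V X : Type*} [Fintype V] [LinearOrder X]
    (G : SimpleGraph V) (ℓ : ℕ) (hℓ : 1 ≤ ℓ) (A : V → Finset X)
    (u : V) (t : ℕ) (ht : 1 ≤ t) :
    minl ℓ ((hopBall G 1 u).biUnion (fun v =>
        minl ℓ ((hopBall G (t - 1) v).biUnion A)))
      = minl ℓ ((hopBall G t u).biUnion A) := by
  rw [minl_neighborhood_composition_general, Nat.add_sub_cancel' ht]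
end

section
/- Ball-counting approximation of the facility radius: let C be a finite nonempty set of points in ℝ^d, f ∈ ℝ^d, λ > 0, and let r_f := max{r ≥ 0 : ∑_{c∈C}[r² − ‖c−f‖²]⁺ ≤ λ}. Define r_f' := sup{r ≥ 0 : |B_C(f,r)|·r² ≤ λ}, where B_C(f,r) := {c ∈ C : ‖c−f‖ ≤ r}. Then r_f/3 ≤ r_f' ≤ r_f. -/
open Classical

/-!
Both quantities being compared are sums over `c ∈ C`, so they can be compared one point at a time.
A point at distance at most `r` contributes `r² - dist² ≤ r²` to the payment and `r²` to the ball
charge, and a farther point contributes `0` to both. Conversely, if `2 s² ≤ r²`, a point at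
distance at most `s` still has `r² - dist² ≥ s²`. Hence the radii differ by a factor of at most
`√2`. The factor is attained by a single point at distance `r / √2` from `f`.
-/

section Radius

variable {X : Type*} [PseudoMetricSpace X] {C : Finset X} {f : X} {lam r s : ℝ}

/-- The payment `∑_{c ∈ C} [r² - dist(c, f)²]⁺` that the points of `C` offer to a facility at `f`
of radius `r`; the radius `r_f` is the largest one whose payment is at most `λ`. -/
noncomputable def radiusPayment (C : Finset X) (f : X) (r : ℝ) : ℝ :=
  ∑ c ∈ C, max 0 (r ^ 2 - dist c f ^ 2)

/-- The ball charge `|B_C(f, r)| · r²`, the counting surrogate for the payment that defines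
`r_f'`. -/
noncomputable def ballCharge (C : Finset X) (f : X) (r : ℝ) : ℝ :=
  ((C.filter (fun c => dist c f ≤ r)).card : ℝ) * r ^ 2

lemma ballCharge_eq_sum_ite (C : Finset X) (f : X) (r : ℝ) :
    ballCharge C f r = ∑ c ∈ C, if dist c f ≤ r then r ^ 2 else 0 := by
  rw [ballCharge, ← Finset.sum_filter, Finset.sum_const, nsmul_eq_mul]

lemma radiusPayment_le_ballCharge (hr : 0 ≤ r) : radiusPayment C f r ≤ ballCharge C f r := by
  rw [radiusPayment, ballCharge_eq_sum_ite]
  refine Finset.sum_le_sum fun c _ => ?_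
  split_ifs with hc
  · exact max_le (sq_nonneg r) (sub_le_self _ (sq_nonneg _))
  · have hsq : r ^ 2 ≤ dist c f ^ 2 := pow_le_pow_left₀ hr (le_of_not_ge hc) 2
    exact max_le le_rfl (sub_nonpos.mpr hsq)

lemma ballCharge_le_radiusPayment (hsr : 2 * s ^ 2 ≤ r ^ 2) :
    ballCharge C f s ≤ radiusPayment C f r := by
  rw [radiusPayment, ballCharge_eq_sum_ite]
  refine Finset.sum_le_sum fun c _ => ?_
  split_ifs with hc
  · have hsq : dist c f ^ 2 ≤ s ^ 2 := pow_le_pow_left₀ dist_nonneg hc 2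
    exact le_max_of_le_right (by linarith)
  · exact le_max_left _ _

theorem radius_ball_approx_general
    (hr : IsGreatest {s : ℝ | 0 ≤ s ∧ radiusPayment C f s ≤ lam} r) :
    r / √2 ≤ sSup {s : ℝ | 0 ≤ s ∧ ballCharge C f s ≤ lam} ∧
      sSup {s : ℝ | 0 ≤ s ∧ ballCharge C f s ≤ lam} ≤ r := by
  obtain ⟨⟨hr_nonneg, hr_payment⟩, hr_max⟩ := hr
  have hupper : r ∈ upperBounds {s : ℝ | 0 ≤ s ∧ ballCharge C f s ≤ lam} :=
    fun s ⟨hs, hs_charge⟩ => hr_max ⟨hs, (radiusPayment_le_ballCharge hs).trans hs_charge⟩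
  have hsq : 2 * (r / √2) ^ 2 ≤ r ^ 2 := by
    rw [div_pow, Real.sq_sqrt zero_le_two, mul_div_cancel₀ _ two_ne_zero]
  have hmem : r / √2 ∈ {s : ℝ | 0 ≤ s ∧ ballCharge C f s ≤ lam} :=
    ⟨by positivity, (ballCharge_le_radiusPayment hsq).trans hr_payment⟩
  exact ⟨le_csSup ⟨r, hupper⟩ hmem, csSup_le ⟨_, hmem⟩ hupper⟩

end Radius

/-- Ball-counting approximation of the facility radius: with
`r_f = max{r ≥ 0 : ∑_{c∈C}[r² − ‖c−f‖²]⁺ ≤ λ}` and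
`r_f' = sup{r ≥ 0 : |B_C(f,r)|·r² ≤ λ}`, we have `r_f/3 ≤ r_f' ≤ r_f`. -/
theorem radius_ball_approx
    (d : ℕ) (C : Finset (EuclideanSpace ℝ (Fin d))) (hC : C.Nonempty)
    (f : EuclideanSpace ℝ (Fin d)) (lam : ℝ) (hlam : 0 < lam)
    -- `rf` is the maximum of `{r ≥ 0 : ∑_{c∈C}[r² − ‖c−f‖²]⁺ ≤ λ}`
    (rf : ℝ) (hrf0 : 0 ≤ rf)
    (hrf1 : ∑ c ∈ C, max 0 (rf ^ 2 - ‖c - f‖ ^ 2) ≤ lam)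
    (hrfmax : ∀ s : ℝ, 0 ≤ s →
      (∑ c ∈ C, max 0 (s ^ 2 - ‖c - f‖ ^ 2)) ≤ lam → s ≤ rf)
    -- `rf' = sup{r ≥ 0 : |B_C(f,r)|·r² ≤ λ}`
    (rf' : ℝ)
    (hrf' : rf' = sSup {s : ℝ | 0 ≤ s ∧
      ((C.filter (fun c => dist c f ≤ s)).card : ℝ) * s ^ 2 ≤ lam}) :
    rf / 3 ≤ rf' ∧ rf' ≤ rf := by
  simp only [← dist_eq_norm] at hrf1 hrfmax
  obtain ⟨hlower, hupper⟩ := radius_ball_approx_general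
    ⟨⟨hrf0, hrf1⟩, fun s ⟨hs, hs_payment⟩ => hrfmax s hs hs_payment⟩
  have hsqrt : √2 ≤ (3 : ℝ) := Real.sqrt_le_iff.mpr (by norm_num)
  exact hrf' ▸ ⟨(div_le_div_of_nonneg_left hrf0 (by positivity) hsqrt).trans hlower, hupper⟩
end

section
/- Constant-factor approximation of the minimal dual value via dyadic ball minima: let F be a finite nonempty set of points in ℝ^d, c ∈ ℝ^d with ‖c − f‖ ≥ 1 for all f ∈ F, and let r : F → ℝ_{>0} assign a positive radius r_f to each facility. Define α_c^* := min_{f∈F} max{r_f², ‖c−f‖²}, and for each integer ℓ ≥ 0 with B_F(c, 2^ℓ) ≠ ∅ define ρ(ℓ) := min{r_f : f ∈ B_F(c, 2^ℓ)}, where B_F(c,s) := {f ∈ F : ‖c−f‖ ≤ s}. Set ᾱ_c := min over all such ℓ of max{ρ(ℓ)², 4^ℓ}. Then α_c^* ≤ ᾱ_c ≤ 4·α_c^*. -/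
open Classical

/-!
A smallest radius in the ball of scale `s` is attained by a facility at distance at most `s`, so
the value at scale `s` dominates the dual value of that facility. Conversely, a facility `f` lies
in a ball whose scale exceeds `dist c f` by at most one factor of the base `b`, which costs a
factor `b ^ 2` after squaring; the base `2` gives the constant `4`.
-/

section DualValue

variable {X : Type*} [PseudoMetricSpace X] {F : Finset X} {c f : X} {r : X → ℝ} {s b : ℝ}

/-- The ball `B_F(c, s)`: the facilities at distance at most `s` from the client `c`. -/
noncomputable def facilityBall (F : Finset X) (c : X) (s : ℝ) : Finset X :=
  F.filter fun f => dist c f ≤ s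

/-- The smallest radius of a facility in `B_F(c, s)`; at `s = 2 ^ ℓ` it is the paper's `ρ(ℓ)`.
Nonemptiness of the ball is an argument, so no default value is involved. -/
noncomputable def ballMinRadius (F : Finset X) (c : X) (r : X → ℝ) (s : ℝ)
    (hne : (facilityBall F c s).Nonempty) : ℝ :=
  ((facilityBall F c s).image r).min' (hne.image r)

/-- The value `max {r_f², dist(c,f)²}` that the facility `f` offers to the client `c`. -/
noncomputable def facilityDualValue (c : X) (r : X → ℝ) (f : X) : ℝ :=
  max (r f ^ 2) (dist c f ^ 2)

/-- The estimate of the dual value of `c` read off from the ball of scale `s` alone, with `s` in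
place of the distance. -/
noncomputable def scaleDualValue (F : Finset X) (c : X) (r : X → ℝ) (s : ℝ)
    (hne : (facilityBall F c s).Nonempty) : ℝ :=
  max (ballMinRadius F c r s hne ^ 2) (s ^ 2)

/-- The estimates at the scales `b ^ ℓ`, `ℓ : ℕ`, whose balls are nonempty; the least element of
this set for `b = 2` is the paper's `ᾱ_c`. -/
def geometricDualValues (F : Finset X) (c : X) (r : X → ℝ) (b : ℝ) : Set ℝ :=
  {v | ∃ ℓ : ℕ, ∃ hne : (facilityBall F c (b ^ ℓ)).Nonempty, v = scaleDualValue F c r (b ^ ℓ) hne}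

theorem mem_facilityBall : f ∈ facilityBall F c s ↔ f ∈ F ∧ dist c f ≤ s :=
  Finset.mem_filter

theorem exists_mem_facilityBall_eq_ballMinRadius (hne : (facilityBall F c s).Nonempty) :
    ∃ f ∈ facilityBall F c s, r f = ballMinRadius F c r s hne :=
  Finset.mem_image.mp (Finset.min'_mem _ (hne.image r))

theorem ballMinRadius_le (hf : f ∈ facilityBall F c s) :
    ballMinRadius F c r s ⟨f, hf⟩ ≤ r f :=
  Finset.min'_le _ _ (Finset.mem_image_of_mem r hf)

theorem ballMinRadius_nonneg (hr : ∀ f ∈ F, 0 ≤ r f) (hne : (facilityBall F c s).Nonempty) :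
    0 ≤ ballMinRadius F c r s hne := by
  obtain ⟨g, hg, hgr⟩ := exists_mem_facilityBall_eq_ballMinRadius (r := r) hne
  exact hgr ▸ hr g (mem_facilityBall.mp hg).1

theorem exists_facilityDualValue_le_scaleDualValue (hne : (facilityBall F c s).Nonempty) :
    ∃ f ∈ F, facilityDualValue c r f ≤ scaleDualValue F c r s hne := by
  obtain ⟨f, hf, hfr⟩ := exists_mem_facilityBall_eq_ballMinRadius (r := r) hne
  obtain ⟨hfF, hfs⟩ := mem_facilityBall.mp hf
  refine ⟨f, hfF, max_le_max (by rw [hfr]) ?_⟩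
  gcongr

theorem scaleDualValue_le_sq_mul_facilityDualValue (hr : ∀ f ∈ F, 0 ≤ r f)
    (hf : f ∈ facilityBall F c s) (hb : 1 ≤ b) (hs : s ≤ b * dist c f) :
    scaleDualValue F c r s ⟨f, hf⟩ ≤ b ^ 2 * facilityDualValue c r f := by
  have hs₀ : 0 ≤ s := dist_nonneg.trans (mem_facilityBall.mp hf).2
  have hρ : ballMinRadius F c r s ⟨f, hf⟩ ^ 2 ≤ b ^ 2 * r f ^ 2 :=
    calc ballMinRadius F c r s ⟨f, hf⟩ ^ 2
        ≤ r f ^ 2 := pow_le_pow_left₀ (ballMinRadius_nonneg hr ⟨f, hf⟩) (ballMinRadius_le hf) 2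
      _ ≤ b ^ 2 * r f ^ 2 := le_mul_of_one_le_left (sq_nonneg _) (one_le_pow₀ hb)
  have hscale : s ^ 2 ≤ b ^ 2 * dist c f ^ 2 :=
    (pow_le_pow_left₀ hs₀ hs 2).trans_eq (mul_pow b (dist c f) 2)
  rw [facilityDualValue, mul_max_of_nonneg _ _ (sq_nonneg b)]
  exact max_le_max hρ hscale

theorem exists_mem_geometricDualValues_le (hr : ∀ f ∈ F, 0 ≤ r f) (hb : 1 < b)
    (hf : f ∈ F) (hcf : 1 ≤ dist c f) :
    ∃ v ∈ geometricDualValues F c r b, v ≤ b ^ 2 * facilityDualValue c r f := by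
  obtain ⟨n, hn_le, hn_lt⟩ := exists_nat_pow_near hcf hb
  have hfball : f ∈ facilityBall F c (b ^ (n + 1)) := mem_facilityBall.mpr ⟨hf, hn_lt.le⟩
  have hscale : b ^ (n + 1) ≤ b * dist c f := by
    rw [pow_succ']
    gcongr
  exact ⟨_, ⟨n + 1, ⟨f, hfball⟩, rfl⟩,
    scaleDualValue_le_sq_mul_facilityDualValue hr hfball hb.le hscale⟩

theorem dyadic_dual_approx_general (hF : F.Nonempty) (hc : ∀ f ∈ F, 1 ≤ dist c f)
    (hr : ∀ f ∈ F, 0 ≤ r f) (hb : 1 < b) {abar : ℝ}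
    (habar : IsLeast (geometricDualValues F c r b) abar) :
    F.inf' hF (facilityDualValue c r) ≤ abar ∧
      abar ≤ b ^ 2 * F.inf' hF (facilityDualValue c r) := by
  constructor
  · obtain ⟨ℓ, hne, rfl⟩ := habar.1
    obtain ⟨f, hf, hle⟩ := exists_facilityDualValue_le_scaleDualValue (r := r) hne
    exact (Finset.inf'_le _ hf).trans hle
  · obtain ⟨f, hf, hmin⟩ := Finset.exists_mem_eq_inf' hF (facilityDualValue c r)
    obtain ⟨v, hv, hle⟩ := exists_mem_geometricDualValues_le hr hb hf (hc f hf)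
    rw [hmin]
    exact (habar.2 hv).trans hle

theorem scaleDualValue_two_pow (ℓ : ℕ) (hne : (facilityBall F c (2 ^ ℓ)).Nonempty) :
    scaleDualValue F c r (2 ^ ℓ) hne = max (ballMinRadius F c r (2 ^ ℓ) hne ^ 2) (4 ^ ℓ) := by
  rw [scaleDualValue, pow_right_comm]
  norm_num

theorem isLeast_geometricDualValues_two_iff {abar : ℝ} :
    IsLeast (geometricDualValues F c r 2) abar ↔
      (∃ ℓ : ℕ, ∃ hne : (facilityBall F c (2 ^ ℓ)).Nonempty,
        abar = max (ballMinRadius F c r (2 ^ ℓ) hne ^ 2) (4 ^ ℓ)) ∧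
      ∀ ℓ : ℕ, ∀ hne : (facilityBall F c (2 ^ ℓ)).Nonempty,
        abar ≤ max (ballMinRadius F c r (2 ^ ℓ) hne ^ 2) (4 ^ ℓ) := by
  simp only [← scaleDualValue_two_pow]
  exact and_congr_right fun _ =>
    ⟨fun h ℓ hne => h ⟨ℓ, hne, rfl⟩, fun h _ ⟨ℓ, hne, hv⟩ => hv ▸ h ℓ hne⟩

end DualValue

/-- Constant-factor approximation of the minimal dual value via dyadic ball minima:
with `α_c^* = min_{f∈F} max{r_f², dist(c,f)²}`, `ρ(ℓ) = min{r_f : f ∈ B_F(c, 2^ℓ)}`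
and `ᾱ_c = min_{ℓ : B_F(c,2^ℓ) ≠ ∅} max{ρ(ℓ)², 4^ℓ}`, we have
`α_c^* ≤ ᾱ_c ≤ 4·α_c^*`. -/
theorem dyadic_dual_approx
    (d : ℕ) (F : Finset (EuclideanSpace ℝ (Fin d))) (hF : F.Nonempty)
    (c : EuclideanSpace ℝ (Fin d)) (hc : ∀ f ∈ F, 1 ≤ dist c f)
    (r : EuclideanSpace ℝ (Fin d) → ℝ) (hr : ∀ f ∈ F, 0 < r f)
    -- `abar` is the minimum over all `ℓ` with nonempty dyadic ball of
    -- `max{ρ(ℓ)², 4^ℓ}`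
    (abar : ℝ)
    (habar1 : ∃ ℓ : ℕ, ∃ hne : (F.filter (fun f => dist c f ≤ 2 ^ ℓ)).Nonempty,
      abar = max ((((F.filter (fun f => dist c f ≤ 2 ^ ℓ)).image r).min'
        (hne.image r)) ^ 2) ((4 : ℝ) ^ ℓ))
    (habar2 : ∀ ℓ : ℕ, ∀ hne : (F.filter (fun f => dist c f ≤ 2 ^ ℓ)).Nonempty,
      abar ≤ max ((((F.filter (fun f => dist c f ≤ 2 ^ ℓ)).image r).min'
        (hne.image r)) ^ 2) ((4 : ℝ) ^ ℓ)) :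
    F.inf' hF (fun f => max (r f ^ 2) (dist c f ^ 2)) ≤ abar ∧
    abar ≤ 4 * F.inf' hF (fun f => max (r f ^ 2) (dist c f ^ 2)) := by
  rw [show (4 : ℝ) = 2 ^ 2 by norm_num]
  exact dyadic_dual_approx_general hF hc (fun f hf => (hr f hf).le) one_lt_two
    (isLeast_geometricDualValues_two_iff.mpr ⟨habar1, habar2⟩)
end
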